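/- arXiv:2305.06188 — 6 statements merged into one kernel-verified Lean document; each statement's English description precedes it below -/
import Mathlib

section
/- Let V and W be finite-dimensional real vector spaces, let T : V → W be a linear map, and for an integer i ≥ 2 let T_i : ∧^i V → W ⊗ ∧^{i−1} V be the unique linear map satisfying T_i(v₁ ∧ ⋯ ∧ v_i) = Σ_{j=1}^{i} (−1)^{j−1} T(v_j) ⊗ (v₁ ∧ ⋯ ∧ v̂_j ∧ ⋯ ∧ v_i) for all v₁, …, v_i ∈ V (where v̂_j means v_j is omitted). Then the kernel of T_i equals the image of the canonical map ∧^i(ker T) → ∧^i V induced by the inclusion ker T ↪ V; consequently the rank of T_i equals binom(dim V, i) − binom(dim ker T, i). -/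
open TensorProduct

/-- The `n`-th exterior power `⋀[ℝ]^n V` of a real vector space `V`, viewed as a submodule
of the exterior algebra of `V`. -/
noncomputable def extPow (n : ℕ) (V : Type*) [AddCommGroup V] [Module ℝ V] :
    Submodule ℝ (ExteriorAlgebra ℝ V) := ⋀[ℝ]^n V

/-- The wedge `v₁ ∧ ⋯ ∧ vₙ` of a family `v : Fin n → V` lies in the `n`-th exterior power. -/
theorem ιMulti_mem_extPow {V : Type*} [AddCommGroup V] [Module ℝ V] (n : ℕ)
    (v : Fin n → V) : ExteriorAlgebra.ιMulti ℝ n v ∈ extPow n V :=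
  ExteriorAlgebra.ιMulti_range ℝ n (Set.mem_range_self v)

theorem ep_wedge {V : Type*} [AddCommGroup V] [Module ℝ V] (n : ℕ)
    (v : Fin (n + 1) → V) (j : Fin (n + 1)) :
    ((-1 : ℝ)) ^ (j : ℕ) • (ExteriorAlgebra.ι ℝ (v j) *
      ExteriorAlgebra.ιMulti ℝ n (fun k => v (j.succAbove k))) =
      ExteriorAlgebra.ιMulti ℝ (n + 1) v := by
  have h := AlternatingMap.map_insertNth (ExteriorAlgebra.ιMulti ℝ (n + 1)) j (v j)
    (j.removeNth v)
  rw [Fin.insertNth_self_removeNth] at h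
  rw [h, ExteriorAlgebra.ιMulti_succ_apply]
  rcases Nat.even_or_odd (j : ℕ) with hj | hj
  · simp only [hj.neg_one_pow, one_smul]
    rfl
  · simp only [hj.neg_one_pow, neg_smul, one_smul]
    rfl

theorem ep_induction {V : Type*} [AddCommGroup V] [Module ℝ V] (n : ℕ) (s : Set V)
    (hs : Submodule.span ℝ s = ⊤) (N : Submodule ℝ (extPow n V))
    (h : ∀ v : Fin n → V, (∀ i, v i ∈ s) →
      (⟨ExteriorAlgebra.ιMulti ℝ n v, ιMulti_mem_extPow n v⟩ : extPow n V) ∈ N)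
    (x : extPow n V) : x ∈ N := by
  have key : extPow n V ≤ N.map (extPow n V).subtype := by
    have e : extPow n V = _ :=
      (exteriorPower.ιMulti_span_fixedDegree_of_span_eq_top (R := ℝ) (n := n) (M := V) hs).symm
    refine e.le.trans (Submodule.span_le.2 ?_)
    rintro _ ⟨v, hv, rfl⟩
    exact ⟨_, h v (fun i => hv ⟨i, rfl⟩), rfl⟩
  obtain ⟨y, hy, hyx⟩ := key x.2
  have : y = x := Subtype.ext hyx
  exact this ▸ hy

/-- Left wedge multiplication. -/
noncomputable def epMul {V W : Type*} [AddCommGroup V] [Module ℝ V]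
    [AddCommGroup W] [Module ℝ W] (n : ℕ) (S : W →ₗ[ℝ] V) :
    W ⊗[ℝ] ↥(extPow n V) →ₗ[ℝ] ↥(extPow (n + 1) V) :=
  TensorProduct.lift (LinearMap.mk₂ ℝ
    (fun w x => ⟨ExteriorAlgebra.ι ℝ (S w) * x.1, by
      have := x.2
      unfold extPow at this ⊢
      unfold ExteriorAlgebra.exteriorPower at this ⊢
      rw [pow_succ']
      exact Submodule.mul_mem_mul ⟨_, rfl⟩ this⟩)
    (fun a b c => Subtype.ext (by simp [add_mul]))
    (fun a b c => Subtype.ext (by simp))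
    (fun a b c => Subtype.ext (by simp [mul_add]))
    (fun a b c => Subtype.ext (by simp)))

theorem epMul_tmul {V W : Type*} [AddCommGroup V] [Module ℝ V]
    [AddCommGroup W] [Module ℝ W] (n : ℕ) (S : W →ₗ[ℝ] V) (w : W) (x : extPow n V) :
    (epMul n S (w ⊗ₜ x) : ExteriorAlgebra ℝ V) = ExteriorAlgebra.ι ℝ (S w) * x.1 := rfl

theorem ep_split {V W : Type*} [AddCommGroup V] [Module ℝ V]
    [AddCommGroup W] [Module ℝ W] (T : V →ₗ[ℝ] W) :
    ∃ (S : W →ₗ[ℝ] V) (C : Submodule ℝ V), (∀ v ∈ C, S (T v) = v) ∧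
      Submodule.span ℝ ((LinearMap.ker T : Set V) ∪ (C : Set V)) = ⊤ := by
  obtain ⟨C, hC⟩ := Submodule.exists_isCompl (LinearMap.ker T)
  have hinj : LinearMap.ker (T ∘ₗ C.subtype) = ⊥ := by
    rw [LinearMap.ker_eq_bot']
    intro c hc
    exact Subtype.ext (Submodule.disjoint_def.1 hC.disjoint c.1 hc c.2)
  obtain ⟨S, hS⟩ := LinearMap.exists_leftInverse_of_injective _ hinj
  refine ⟨C.subtype ∘ₗ S, C, ?_, ?_⟩
  · intro v hv
    exact congrArg Subtype.val (LinearMap.congr_fun hS ⟨v, hv⟩)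
  · rw [Submodule.span_union, Submodule.span_eq, Submodule.span_eq]
    exact hC.sup_eq_top

/-- Let `V`, `W` be finite-dimensional real vector spaces, `T : V → W` a
linear map, and for `i = n + 1 ≥ 2` let `Ti : ⋀^i V → W ⊗ ⋀^{i-1} V` be the linear map
satisfying `Ti (v₁ ∧ ⋯ ∧ vᵢ) = ∑ⱼ (-1)^(j-1) T(vⱼ) ⊗ (v₁ ∧ ⋯ ∧ v̂ⱼ ∧ ⋯ ∧ vᵢ)`.
Then the kernel of `Ti` equals the image of the canonical map `⋀^i (ker T) → ⋀^i V`
induced by the inclusion `ker T ↪ V`, and consequently the rank of `Ti` equals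
`choose (dim V) i - choose (dim (ker T)) i`. -/
theorem stmt0 {V W : Type*} [AddCommGroup V] [Module ℝ V] [FiniteDimensional ℝ V]
    [AddCommGroup W] [Module ℝ W] [FiniteDimensional ℝ W]
    (T : V →ₗ[ℝ] W) (n : ℕ) (hn : 1 ≤ n)
    (Ti : ↥(extPow (n + 1) V) →ₗ[ℝ] W ⊗[ℝ] ↥(extPow n V))
    (hTi : ∀ v : Fin (n + 1) → V,
      Ti ⟨ExteriorAlgebra.ιMulti ℝ (n + 1) v, ιMulti_mem_extPow (n + 1) v⟩ =
        ∑ j : Fin (n + 1), ((-1 : ℝ)) ^ (j : ℕ) •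
          (T (v j) ⊗ₜ[ℝ]
            (⟨ExteriorAlgebra.ιMulti ℝ n (fun k => v (j.succAbove k)),
              ιMulti_mem_extPow n _⟩ : ↥(extPow n V)))) :
    Submodule.map (extPow (n + 1) V).subtype (LinearMap.ker Ti) =
      Submodule.map (ExteriorAlgebra.map (LinearMap.ker T).subtype).toLinearMap
        (extPow (n + 1) ↥(LinearMap.ker T)) ∧
    Module.finrank ℝ ↥(LinearMap.range Ti) =
      Nat.choose (Module.finrank ℝ V) (n + 1) -
        Nat.choose (Module.finrank ℝ ↥(LinearMap.ker T)) (n + 1) := by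
  have himg : Submodule.map (extPow (n + 1) V).subtype (LinearMap.ker Ti) =
      Submodule.map (ExteriorAlgebra.map (LinearMap.ker T).subtype).toLinearMap
        (extPow (n + 1) ↥(LinearMap.ker T)) := by
    apply le_antisymm
    · obtain ⟨S, C, hS, hspan⟩ := ep_split T
      set I := Submodule.map (ExteriorAlgebra.map (LinearMap.ker T).subtype).toLinearMap
        (extPow (n + 1) ↥(LinearMap.ker T)) with hI
      let D : Module.End ℝ (extPow (n + 1) V) := epMul n S ∘ₗ Ti
      let p : Polynomial ℝ := ∏ k ∈ Finset.range (n + 1),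
        (Polynomial.X - Polynomial.C ((k : ℝ) + 1))
      have hp0 : p.eval 0 ≠ 0 := by
        rw [Polynomial.eval_prod, Finset.prod_ne_zero_iff]
        intro k _
        simp only [Polynomial.eval_sub, Polynomial.eval_X, Polynomial.eval_C]
        have : (0 : ℝ) < (k : ℝ) + 1 := by positivity
        linarith
      have hpm : ∀ m : ℕ, m ≠ 0 → m ≤ n + 1 → p.eval (m : ℝ) = 0 := by
        intro m h0 h1
        rw [Polynomial.eval_prod]
        apply Finset.prod_eq_zero (i := m - 1) (Finset.mem_range.2 (by omega))
        obtain ⟨q, rfl⟩ := Nat.exists_eq_succ_of_ne_zero h0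
        simp
      have hmain : ∀ x, x ∈ (I.comap (extPow (n + 1) V).subtype).comap (Polynomial.aeval D p) := by
        apply ep_induction (n + 1) _ hspan
        intro v hv
        classical
        set A := Finset.univ.filter (fun j => v j ∉ LinearMap.ker T) with hA
        set e : extPow (n + 1) V :=
          ⟨ExteriorAlgebra.ιMulti ℝ (n + 1) v, ιMulti_mem_extPow (n + 1) v⟩ with he
        have hD : D e = (A.card : ℝ) • e := by
          apply Subtype.ext
          change ((epMul n S (Ti e) : extPow (n + 1) V) : ExteriorAlgebra ℝ V) = _
          rw [he, hTi, map_sum, AddSubmonoidClass.coe_finsetSum]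
          have hterm : ∀ j : Fin (n + 1), ((epMul n S (((-1 : ℝ)) ^ (j : ℕ) •
              (T (v j) ⊗ₜ[ℝ] (⟨ExteriorAlgebra.ιMulti ℝ n (fun k => v (j.succAbove k)),
              ιMulti_mem_extPow n _⟩ : ↥(extPow n V)))) : extPow (n + 1) V) :
                ExteriorAlgebra ℝ V) =
              if v j ∉ LinearMap.ker T then ExteriorAlgebra.ιMulti ℝ (n + 1) v else 0 := by
            intro j
            rw [map_smul, Submodule.coe_smul, epMul_tmul]
            by_cases hj : v j ∈ LinearMap.ker T
            · rw [LinearMap.mem_ker.1 hj]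
              simp [hj]
            · rw [if_pos hj, hS _ ((hv j).resolve_left hj), ep_wedge]
          rw [Finset.sum_congr rfl (fun j _ => hterm j), ← Finset.sum_filter, Finset.sum_const,
            Submodule.coe_smul, Nat.cast_smul_eq_nsmul]
        change ((Polynomial.aeval D p e : extPow (n + 1) V) : ExteriorAlgebra ℝ V) ∈ I
        rw [Module.End.aeval_apply_of_mem_apply_eq_smul hD, Submodule.coe_smul]
        by_cases h0 : A.card = 0
        · apply Submodule.smul_mem
          have hk : ∀ j, v j ∈ LinearMap.ker T := by
            intro j
            by_contra hj
            rw [Finset.card_eq_zero] at h0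
            have : j ∈ A := by simp [hA, LinearMap.mem_ker.not.1 hj]
            rw [h0] at this
            simp at this
          refine ⟨_, ιMulti_mem_extPow (n + 1) (fun j => (⟨v j, hk j⟩ : LinearMap.ker T)), ?_⟩
          exact ExteriorAlgebra.map_apply_ιMulti _ _
        · rw [hpm _ h0 (by simpa using Finset.card_le_univ A), zero_smul]
          exact I.zero_mem
      rintro _ ⟨x, hx, rfl⟩
      have hx0 : D x = (0 : ℝ) • x := by
        change epMul n S (Ti x) = _
        rw [LinearMap.mem_ker.1 hx, map_zero, zero_smul]
      have h := hmain x
      rw [Submodule.mem_comap, Module.End.aeval_apply_of_mem_apply_eq_smul hx0] at h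
      exact (Submodule.smul_mem_iff _ hp0).1 h
    · rintro _ ⟨x, hx, rfl⟩
      have key : ∀ y, y ∈ ((LinearMap.ker Ti).map (extPow (n + 1) V).subtype).comap
          ((ExteriorAlgebra.map (LinearMap.ker T).subtype).toLinearMap ∘ₗ
            (extPow (n + 1) ↥(LinearMap.ker T)).subtype) := by
        apply ep_induction (n + 1) Set.univ Submodule.span_univ
        intro u _
        refine ⟨⟨ExteriorAlgebra.ιMulti ℝ (n + 1) (fun j => (u j : V)),
          ιMulti_mem_extPow (n + 1) _⟩, ?_, ?_⟩
        · rw [SetLike.mem_coe, LinearMap.mem_ker, hTi]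
          apply Finset.sum_eq_zero
          intro j _
          rw [LinearMap.mem_ker.1 (u j).2]
          simp
        · exact (ExteriorAlgebra.map_apply_ιMulti (LinearMap.ker T).subtype u).symm
      exact key ⟨x, hx⟩
  refine ⟨himg, ?_⟩
  have hfin : FiniteDimensional ℝ (extPow (n + 1) V) :=
    inferInstanceAs (Module.Finite ℝ (⋀[ℝ]^(n + 1) V))
  have h1 := Ti.finrank_range_add_finrank_ker
  have h2 : Module.finrank ℝ (extPow (n + 1) V) = (Module.finrank ℝ V).choose (n + 1) :=
    exteriorPower.finrank_eq ℝ (n + 1)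
  have h3 : Module.finrank ℝ (extPow (n + 1) (LinearMap.ker T)) =
      (Module.finrank ℝ (LinearMap.ker T)).choose (n + 1) :=
    exteriorPower.finrank_eq ℝ (n + 1)
  have h4 := congrArg (fun N : Submodule ℝ (ExteriorAlgebra ℝ V) => Module.finrank ℝ N) himg
  have hinj : Function.Injective
      (ExteriorAlgebra.map (LinearMap.ker T).subtype).toLinearMap :=
    ExteriorAlgebra.map_injective_field (Submodule.ker_subtype _)
  beta_reduce at h4
  rw [← (Submodule.equivMapOfInjective _ (Submodule.injective_subtype _) _).finrank_eq,
    ← (Submodule.equivMapOfInjective _ hinj _).finrank_eq, h3] at h4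
  omega
end

section
/- Let Z be a real vector space, let V, W ⊆ Z be subspaces with V ∩ W = {0}, let V′ be a real vector space, and let λ : V → V′ be a linear isomorphism. Inside V′ ⊗ ∧²Z define Ẽ₂ := span{ v′ ⊗ (w ∧ v) − λ(v) ⊗ (w ∧ λ⁻¹(v′)) : v′ ∈ V′, v ∈ V, w ∈ W }, Ẽ₀ := span{ v′ ⊗ (w ∧ v) + λ(v) ⊗ (w ∧ λ⁻¹(v′)) : v′ ∈ V′, v ∈ V, w ∈ W }, Ẽ′₃ := span{ v′ ⊗ (v₁ ∧ v₂) − λ(v₁) ⊗ (λ⁻¹(v′) ∧ v₂) + λ(v₂) ⊗ (λ⁻¹(v′) ∧ v₁) : v′ ∈ V′, v₁, v₂ ∈ V }, and Ẽ′₀ := span{ −2 v′ ⊗ (v₁ ∧ v₂) − λ(v₁) ⊗ (λ⁻¹(v′) ∧ v₂) + λ(v₂) ⊗ (λ⁻¹(v′) ∧ v₁) : v′ ∈ V′, v₁, v₂ ∈ V }. Then V′ ⊗ (W ∧ V) = Ẽ₂ ⊕ Ẽ₀ and V′ ⊗ (V ∧ V) = Ẽ′₃ ⊕ Ẽ′₀.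 -/
open TensorProduct

/-- The second exterior power `⋀[ℝ]^2 Z` of a real vector space `Z`, viewed as a submodule
of the exterior algebra of `Z`. -/
noncomputable def extPow2 (Z : Type*) [AddCommGroup Z] [Module ℝ Z] :
    Submodule ℝ (ExteriorAlgebra ℝ Z) := ⋀[ℝ]^2 Z

/-- The wedge product `w ∧ u` of two vectors, as an element of the second exterior power. -/
noncomputable def wedge {Z : Type*} [AddCommGroup Z] [Module ℝ Z] (w u : Z) :
    ↥(extPow2 Z) :=
  ⟨ExteriorAlgebra.ιMulti ℝ 2 ![w, u],
    ExteriorAlgebra.ιMulti_range ℝ 2 (Set.mem_range_self _)⟩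

section Helpers

variable {Z : Type*} [AddCommGroup Z] [Module ℝ Z]

theorem wedge_val (w u : Z) : (wedge w u : ExteriorAlgebra ℝ Z) =
    ExteriorAlgebra.ι ℝ w * ExteriorAlgebra.ι ℝ u := by
  simp [wedge, ExteriorAlgebra.ιMulti_apply]

theorem wedge_swap (w u : Z) : wedge w u = - wedge u w := by
  apply Subtype.ext
  rw [Submodule.coe_neg, wedge_val, wedge_val]
  exact eq_neg_of_add_eq_zero_left (ExteriorAlgebra.ι_add_mul_swap w u)

/-- The wedge as a bilinear map. -/
noncomputable def wedgeL : Z →ₗ[ℝ] Z →ₗ[ℝ] ↥(extPow2 Z) :=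
  LinearMap.mk₂ ℝ wedge
    (by intros; apply Subtype.ext; simp [wedge_val, add_mul])
    (by intros; apply Subtype.ext; simp [wedge_val])
    (by intros; apply Subtype.ext; simp [wedge_val, mul_add])
    (by intros; apply Subtype.ext; simp [wedge_val])

/-- Antisymmetrization of a bilinear map. -/
def altMap {N : Type*} [AddCommGroup N] [Module ℝ N] (f : Z →ₗ[ℝ] Z →ₗ[ℝ] N) :
    Z [⋀^Fin 2]→ₗ[ℝ] N where
  toFun m := f (m 0) (m 1) - f (m 1) (m 0)
  map_update_add' := by
    intro _ m i x y
    fin_cases i <;> simp [Function.update_apply] <;> abel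
  map_update_smul' := by
    intro _ m i x y
    fin_cases i <;> simp [Function.update_apply, smul_sub]
  map_eq_zero_of_eq' := by
    intro m i j h hij
    fin_cases i <;> fin_cases j <;> simp_all

theorem exists_lift {N : Type*} [AddCommGroup N] [Module ℝ N] (f : Z →ₗ[ℝ] Z →ₗ[ℝ] N) :
    ∃ F : ↥(extPow2 Z) →ₗ[ℝ] N, ∀ y z, F (wedge y z) = f y z - f z y := by
  refine ⟨exteriorPower.alternatingMapLinearEquiv (altMap f), fun y z => ?_⟩
  exact exteriorPower.alternatingMapLinearEquiv_apply_ιMulti (altMap f) ![y, z]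

theorem exists_T {V' : Type*} [AddCommGroup V'] [Module ℝ V']
    (V W : Submodule ℝ Z) (hVW : V ⊓ W = ⊥) (lam : ↥V ≃ₗ[ℝ] V') :
    ∃ (P : Z →ₗ[ℝ] ↥V) (T : V' ⊗[ℝ] ↥(extPow2 Z) →ₗ[ℝ] V' ⊗[ℝ] ↥(extPow2 Z)),
      (∀ v : ↥V, P v = v) ∧ (∀ w ∈ W, P w = 0) ∧
      ∀ a y z, T (a ⊗ₜ wedge y z) = lam (P y) ⊗ₜ wedge z ((lam.symm a : ↥V) : Z)
        - lam (P z) ⊗ₜ wedge y ((lam.symm a : ↥V) : Z) := by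
  obtain ⟨C, hWC, hC⟩ := (disjoint_iff.mpr hVW).symm.exists_isCompl
  have hc : IsCompl V C := hC.symm
  let P : Z →ₗ[ℝ] ↥V := V.projectionOnto C hc
  let f : Z →ₗ[ℝ] Z →ₗ[ℝ] V' →ₗ[ℝ] V' ⊗[ℝ] ↥(extPow2 Z) :=
    LinearMap.mk₂ ℝ (fun y z => (TensorProduct.mk ℝ V' ↥(extPow2 Z) (lam (P y))) ∘ₗ
        (wedgeL z) ∘ₗ V.subtype ∘ₗ lam.symm.toLinearMap)
      (by intros; ext; simp [add_tmul])
      (by intros; ext; simp [smul_tmul'])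
      (by intros; ext; simp [tmul_add])
      (by intros; ext; simp)
  obtain ⟨F, hF⟩ := exists_lift f
  refine ⟨P, TensorProduct.lift F.flip, fun v => ?_, fun w hw => ?_, fun a y z => ?_⟩
  · simp [P]
  · simp [P, hWC hw]
  · rw [TensorProduct.lift.tmul, LinearMap.flip_apply, hF]
    rfl

theorem span_eig {M : Type*} [AddCommGroup M] [Module ℝ M] (T : M →ₗ[ℝ] M) (c d : ℝ)
    (hcd : c ≠ d) (s t : Set M) (hs : ∀ x ∈ s, T x = c • x) (ht : ∀ x ∈ t, T x = d • x) :
    Disjoint (Submodule.span ℝ s) (Submodule.span ℝ t) := by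
  have key : ∀ (c : ℝ) (s : Set M), (∀ x ∈ s, T x = c • x) →
      Submodule.span ℝ s ≤ Module.End.eigenspace T c := by
    intro c s hs
    rw [Submodule.span_le]
    intro x hx
    exact Module.End.mem_eigenspace_iff.mpr (hs x hx)
  rw [Submodule.disjoint_def]
  intro x hx hy
  have h1 := Module.End.mem_eigenspace_iff.mp (key c s hs hx)
  have h2 := Module.End.mem_eigenspace_iff.mp (key d t ht hy)
  have h3 : (c - d) • x = 0 := by rw [sub_smul, ← h1, ← h2, sub_self]
  exact (smul_eq_zero.mp h3).resolve_left (sub_ne_zero.mpr hcd)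

end Helpers

/-- Let `Z` be a real vector space, `V, W ⊆ Z` subspaces with
`V ∩ W = {0}`, `V′` a real vector space and `λ : V → V′` a linear isomorphism.  Inside
`V′ ⊗ ∧²Z` define
`Ẽ₂  = span{ v′ ⊗ (w ∧ v) − λ(v) ⊗ (w ∧ λ⁻¹(v′)) }`,
`Ẽ₀  = span{ v′ ⊗ (w ∧ v) + λ(v) ⊗ (w ∧ λ⁻¹(v′)) }`,
`Ẽ′₃ = span{ v′ ⊗ (v₁ ∧ v₂) − λ(v₁) ⊗ (λ⁻¹(v′) ∧ v₂) + λ(v₂) ⊗ (λ⁻¹(v′) ∧ v₁) }`,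
`Ẽ′₀ = span{ −2 v′ ⊗ (v₁ ∧ v₂) − λ(v₁) ⊗ (λ⁻¹(v′) ∧ v₂) + λ(v₂) ⊗ (λ⁻¹(v′) ∧ v₁) }`.
Then `V′ ⊗ (W ∧ V) = Ẽ₂ ⊕ Ẽ₀` and `V′ ⊗ (V ∧ V) = Ẽ′₃ ⊕ Ẽ′₀`. -/
theorem stmt3 {Z V' : Type*} [AddCommGroup Z] [Module ℝ Z]
    [AddCommGroup V'] [Module ℝ V']
    (V W : Submodule ℝ Z) (hVW : V ⊓ W = ⊥)
    (lam : ↥V ≃ₗ[ℝ] V')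
    (WV' VV' Et2 Et0 Et3' Et0' : Submodule ℝ (V' ⊗[ℝ] ↥(extPow2 Z)))
    (hWV' : WV' = Submodule.span ℝ
      {x | ∃ v' : V', ∃ w ∈ W, ∃ v : ↥V, x = v' ⊗ₜ[ℝ] wedge w (v : Z)})
    (hVV' : VV' = Submodule.span ℝ
      {x | ∃ v' : V', ∃ v₁ v₂ : ↥V, x = v' ⊗ₜ[ℝ] wedge (v₁ : Z) (v₂ : Z)})
    (hEt2 : Et2 = Submodule.span ℝ
      {x | ∃ v' : V', ∃ v : ↥V, ∃ w ∈ W,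
        x = v' ⊗ₜ[ℝ] wedge w (v : Z) - (lam v) ⊗ₜ[ℝ] wedge w ((lam.symm v' : ↥V) : Z)})
    (hEt0 : Et0 = Submodule.span ℝ
      {x | ∃ v' : V', ∃ v : ↥V, ∃ w ∈ W,
        x = v' ⊗ₜ[ℝ] wedge w (v : Z) + (lam v) ⊗ₜ[ℝ] wedge w ((lam.symm v' : ↥V) : Z)})
    (hEt3' : Et3' = Submodule.span ℝ
      {x | ∃ v' : V', ∃ v₁ v₂ : ↥V,
        x = v' ⊗ₜ[ℝ] wedge (v₁ : Z) (v₂ : Z)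
              - (lam v₁) ⊗ₜ[ℝ] wedge ((lam.symm v' : ↥V) : Z) (v₂ : Z)
              + (lam v₂) ⊗ₜ[ℝ] wedge ((lam.symm v' : ↥V) : Z) (v₁ : Z)})
    (hEt0' : Et0' = Submodule.span ℝ
      {x | ∃ v' : V', ∃ v₁ v₂ : ↥V,
        x = (-2 : ℝ) • (v' ⊗ₜ[ℝ] wedge (v₁ : Z) (v₂ : Z))
              - (lam v₁) ⊗ₜ[ℝ] wedge ((lam.symm v' : ↥V) : Z) (v₂ : Z)
              + (lam v₂) ⊗ₜ[ℝ] wedge ((lam.symm v' : ↥V) : Z) (v₁ : Z)}) :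
    (WV' = Et2 ⊔ Et0 ∧ Disjoint Et2 Et0) ∧
    (VV' = Et3' ⊔ Et0' ∧ Disjoint Et3' Et0') := by
  subst hWV' hVV' hEt2 hEt0 hEt3' hEt0'
  obtain ⟨P, T, hPV, hPW, hT⟩ := exists_T V W hVW lam
  refine ⟨⟨le_antisymm ?_ (sup_le ?_ ?_), ?_⟩, ⟨le_antisymm ?_ (sup_le ?_ ?_), ?_⟩⟩
  · rw [Submodule.span_le]
    rintro _ ⟨a, w, hw, v, rfl⟩
    have h := Submodule.smul_mem _ (2⁻¹ : ℝ) (Submodule.add_mem_sup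
      (Submodule.subset_span (R := ℝ) (s := {x | ∃ v' : V', ∃ v : ↥V, ∃ w ∈ W,
        x = v' ⊗ₜ[ℝ] wedge w (v : Z) - (lam v) ⊗ₜ[ℝ] wedge w ((lam.symm v' : ↥V) : Z)})
        ⟨a, v, w, hw, rfl⟩)
      (Submodule.subset_span (R := ℝ) (s := {x | ∃ v' : V', ∃ v : ↥V, ∃ w ∈ W,
        x = v' ⊗ₜ[ℝ] wedge w (v : Z) + (lam v) ⊗ₜ[ℝ] wedge w ((lam.symm v' : ↥V) : Z)})
        ⟨a, v, w, hw, rfl⟩))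
    rw [SetLike.mem_coe]
    convert h using 1
    module
  · rw [Submodule.span_le]
    rintro _ ⟨a, v, w, hw, rfl⟩
    exact Submodule.sub_mem _ (Submodule.subset_span ⟨_, w, hw, _, rfl⟩)
      (Submodule.subset_span ⟨_, w, hw, _, rfl⟩)
  · rw [Submodule.span_le]
    rintro _ ⟨a, v, w, hw, rfl⟩
    exact Submodule.add_mem _ (Submodule.subset_span ⟨_, w, hw, _, rfl⟩)
      (Submodule.subset_span ⟨_, w, hw, _, rfl⟩)
  · apply span_eig T 1 (-1) (by norm_num)
    · rintro _ ⟨a, v, w, hw, rfl⟩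
      simp only [map_sub, hT, hPV, hPW w hw, map_zero, zero_tmul, LinearEquiv.apply_symm_apply,
        LinearEquiv.symm_apply_apply]
      module
    · rintro _ ⟨a, v, w, hw, rfl⟩
      simp only [map_add, hT, hPV, hPW w hw, map_zero, zero_tmul, LinearEquiv.apply_symm_apply,
        LinearEquiv.symm_apply_apply]
      module
  · rw [Submodule.span_le]
    rintro _ ⟨a, v₁, v₂, rfl⟩
    have h := Submodule.add_mem_sup
      (Submodule.smul_mem _ (3⁻¹ : ℝ) (Submodule.subset_span (R := ℝ)
        (s := {x | ∃ v' : V', ∃ v₁ v₂ : ↥V,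
        x = v' ⊗ₜ[ℝ] wedge (v₁ : Z) (v₂ : Z)
              - (lam v₁) ⊗ₜ[ℝ] wedge ((lam.symm v' : ↥V) : Z) (v₂ : Z)
              + (lam v₂) ⊗ₜ[ℝ] wedge ((lam.symm v' : ↥V) : Z) (v₁ : Z)})
        ⟨a, v₁, v₂, rfl⟩))
      (Submodule.smul_mem _ (-3⁻¹ : ℝ) (Submodule.subset_span (R := ℝ)
        (s := {x | ∃ v' : V', ∃ v₁ v₂ : ↥V,
        x = (-2 : ℝ) • (v' ⊗ₜ[ℝ] wedge (v₁ : Z) (v₂ : Z))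
              - (lam v₁) ⊗ₜ[ℝ] wedge ((lam.symm v' : ↥V) : Z) (v₂ : Z)
              + (lam v₂) ⊗ₜ[ℝ] wedge ((lam.symm v' : ↥V) : Z) (v₁ : Z)})
        ⟨a, v₁, v₂, rfl⟩))
    rw [SetLike.mem_coe]
    convert h using 1
    module
  · rw [Submodule.span_le]
    rintro _ ⟨a, v₁, v₂, rfl⟩
    exact Submodule.add_mem _ (Submodule.sub_mem _ (Submodule.subset_span ⟨_, _, _, rfl⟩)
      (Submodule.subset_span ⟨_, _, _, rfl⟩)) (Submodule.subset_span ⟨_, _, _, rfl⟩)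
  · rw [Submodule.span_le]
    rintro _ ⟨a, v₁, v₂, rfl⟩
    exact Submodule.add_mem _ (Submodule.sub_mem _
      (Submodule.smul_mem _ _ (Submodule.subset_span ⟨_, _, _, rfl⟩))
      (Submodule.subset_span ⟨_, _, _, rfl⟩)) (Submodule.subset_span ⟨_, _, _, rfl⟩)
  · apply span_eig T 2 (-1) (by norm_num)
    · rintro _ ⟨a, v₁, v₂, rfl⟩
      simp only [map_sub, map_add, hT, hPV, LinearEquiv.apply_symm_apply,
        LinearEquiv.symm_apply_apply]
      rw [wedge_swap (v₂ : Z) (v₁ : Z), wedge_swap (v₂ : Z) (lam.symm a : Z),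
        wedge_swap (v₁ : Z) (lam.symm a : Z)]
      simp only [tmul_neg]
      module
    · rintro _ ⟨a, v₁, v₂, rfl⟩
      simp only [map_sub, map_add, map_smul, hT, hPV, LinearEquiv.apply_symm_apply,
        LinearEquiv.symm_apply_apply]
      rw [wedge_swap (v₂ : Z) (v₁ : Z), wedge_swap (v₂ : Z) (lam.symm a : Z),
        wedge_swap (v₁ : Z) (lam.symm a : Z)]
      simp only [tmul_neg]
      module
end

section
/- Let 𝔤 be a finite-dimensional real Lie algebra equipped with an inner product ⟨·,·⟩, and assume 𝔤 = 𝔷(𝔤) ⊕ [𝔤,𝔤] as vector spaces. Let Γ be a group acting on 𝔤 by Lie algebra automorphisms each of which preserves ⟨·,·⟩ and fixes 𝔷(𝔤) pointwise. Let 𝔭 ⊆ 𝔤 be a Γ-invariant subspace. Then Γ acts trivially on the subspace (𝔭 ∩ [𝔤,𝔤])^⊥ ∩ 𝔭, i.e., γ·Z = Z for every γ ∈ Γ and every Z ∈ (𝔭 ∩ [𝔤,𝔤])^⊥ ∩ 𝔭, where ^⊥ denotes the orthogonal complement in 𝔤 with respect to ⟨·,·⟩. -/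
/-- Let `𝔤` be a finite-dimensional real Lie algebra with an inner
product `B`, such that `𝔤 = 𝔷(𝔤) ⊕ [𝔤,𝔤]` as vector spaces.  Let `Γ` act on `𝔤` by Lie
algebra automorphisms, each preserving `B` and fixing `𝔷(𝔤)` pointwise, and let
`𝔭 ⊆ 𝔤` be a `Γ`-invariant subspace.  Then `Γ` acts trivially on
`(𝔭 ∩ [𝔤,𝔤])^⊥ ∩ 𝔭`. -/
theorem stmt7 {L : Type*} [LieRing L] [LieAlgebra ℝ L] [FiniteDimensional ℝ L]
    (B : L →ₗ[ℝ] L →ₗ[ℝ] ℝ)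
    (hBsymm : ∀ x y : L, B x y = B y x)
    (hBposdef : ∀ x : L, x ≠ 0 → 0 < B x x)
    (hzd_sup : (LieSubmodule.toSubmodule (LieAlgebra.center ℝ L) : Submodule ℝ L) ⊔
        (LieSubmodule.toSubmodule (⁅(⊤ : LieIdeal ℝ L), (⊤ : LieIdeal ℝ L)⁆ : LieIdeal ℝ L)) = ⊤)
    (hzd_disj : Disjoint
        (LieSubmodule.toSubmodule (LieAlgebra.center ℝ L) : Submodule ℝ L)
        (LieSubmodule.toSubmodule (⁅(⊤ : LieIdeal ℝ L), (⊤ : LieIdeal ℝ L)⁆ : LieIdeal ℝ L)))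
    {Γ : Type*} [Group Γ] (ρ : Γ → (L ≃ₗ⁅ℝ⁆ L))
    (hone : ∀ x : L, ρ 1 x = x)
    (hmul : ∀ γ₁ γ₂ : Γ, ∀ x : L, ρ (γ₁ * γ₂) x = ρ γ₁ (ρ γ₂ x))
    (hBpres : ∀ γ : Γ, ∀ x y : L, B (ρ γ x) (ρ γ y) = B x y)
    (hfix : ∀ γ : Γ, ∀ x ∈ LieAlgebra.center ℝ L, ρ γ x = x)
    (p : Submodule ℝ L) (hp : ∀ γ : Γ, ∀ x ∈ p, ρ γ x ∈ p) :
    ∀ γ : Γ, ∀ Z ∈ p,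
      (∀ y ∈ p, y ∈ (⁅(⊤ : LieIdeal ℝ L), (⊤ : LieIdeal ℝ L)⁆ : LieIdeal ℝ L) → B Z y = 0) →
      ρ γ Z = Z := by
  intro γ Z hZ hperp
  have hder : ∀ d ∈ (⁅(⊤ : LieIdeal ℝ L), (⊤ : LieIdeal ℝ L)⁆ : LieIdeal ℝ L),
      ρ γ d ∈ (⁅(⊤ : LieIdeal ℝ L), (⊤ : LieIdeal ℝ L)⁆ : LieIdeal ℝ L) := by
    intro d hd
    rw [← LieSubmodule.mem_toSubmodule, LieSubmodule.lieIdeal_oper_eq_linear_span'] at hd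
    induction hd using Submodule.span_induction with
    | mem x hx =>
      obtain ⟨a, -, b, -, rfl⟩ := hx
      rw [LieEquiv.map_lie]
      exact LieSubmodule.lie_mem_lie (LieSubmodule.mem_top _) (LieSubmodule.mem_top _)
    | zero => rw [map_zero]; exact zero_mem _
    | add x y _ _ hx hy => rw [map_add]; exact add_mem hx hy
    | smul a x _ hx => rw [map_smul]; exact SMulMemClass.smul_mem a hx
  have hw : ρ γ Z - Z ∈ (⁅(⊤ : LieIdeal ℝ L), (⊤ : LieIdeal ℝ L)⁆ : LieIdeal ℝ L) := by
    have hmem : Z ∈ (⊤ : Submodule ℝ L) := Submodule.mem_top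
    rw [← hzd_sup] at hmem
    obtain ⟨c, hc, d, hd, rfl⟩ := Submodule.mem_sup.1 hmem
    rw [map_add, hfix γ c hc, add_sub_add_left_eq_sub]
    exact sub_mem (hder d hd) hd
  have h0 := hperp _ (p.sub_mem (hp γ Z hZ) hZ) hw
  by_contra hne
  have hpos := hBposdef _ (sub_ne_zero.2 hne)
  have h1 := hBpres γ Z Z
  have h2 := hBsymm Z (ρ γ Z)
  simp only [map_sub, LinearMap.sub_apply] at h0 hpos
  linarith
end

section
/- Let 𝔤 be a finite-dimensional real Lie algebra with 𝔤 = 𝔷(𝔤) ⊕ 𝔤₁ ⊕ ⋯ ⊕ 𝔤_r, where 𝔷(𝔤) is the center and each 𝔤ᵢ is an ideal of 𝔤 that is a simple Lie algebra with negative-definite Killing form. For each i let K̃ᵢ denote the symmetric bilinear form on 𝔤 obtained by extending the Killing form of 𝔤ᵢ by zero on the other summands. Then a symmetric bilinear form B on 𝔤 is invariant if and only if there exist real numbers c₁, …, c_r and a symmetric bilinear form B₀ on 𝔷(𝔤), extended by zero to 𝔤, such that B = B₀ + c₁K̃₁ + ⋯ + c_rK̃_r. In particular, K̃₁, …, K̃_r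 restrict to a basis of the space of invariant symmetric bilinear forms on 𝔤₁ ⊕ ⋯ ⊕ 𝔤_r, and the space of invariant symmetric bilinear forms on 𝔤 has dimension m(m+1)/2 + r, where m = dim 𝔷(𝔤). -/
/-- The space of invariant symmetric bilinear forms on a real Lie algebra `L`. -/
noncomputable def invSymmForms (L : Type*) [LieRing L] [LieAlgebra ℝ L] :
    Submodule ℝ (L →ₗ[ℝ] L →ₗ[ℝ] ℝ) where
  carrier := {B | (∀ x y z : L, B ⁅x, y⁆ z = B x ⁅y, z⁆) ∧ ∀ x y : L, B x y = B y x}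
  add_mem' := by
    rintro B C ⟨hB1, hB2⟩ ⟨hC1, hC2⟩
    exact ⟨fun x y z => by simp [hB1 x y z, hC1 x y z],
      fun x y => by simp [hB2 x y, hC2 x y]⟩
  zero_mem' := ⟨fun _ _ _ => by simp, fun _ _ => by simp⟩
  smul_mem' := by
    rintro c B ⟨h1, h2⟩
    exact ⟨fun x y z => by simp [h1 x y z], fun x y => by simp [h2 x y]⟩

theorem aux_eig {V : Type*} [AddCommGroup V] [Module ℝ V] [FiniteDimensional ℝ V] [Nontrivial V]
    (P B : V →ₗ[ℝ] V →ₗ[ℝ] ℝ) (hPs : ∀ x y, P x y = P y x) (hP : ∀ x, x ≠ 0 → 0 < P x x)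
    (hB : ∀ x y, B x y = B y x) : ∃ (c : ℝ) (v : V), v ≠ 0 ∧ ∀ w, B v w = c * P v w := by
  have hinj : Function.Injective P := by
    rw [injective_iff_map_eq_zero]
    intro x hx
    by_contra h
    have := hP x h
    rw [hx] at this
    simp at this
  let e : V ≃ₗ[ℝ] (V →ₗ[ℝ] ℝ) :=
    LinearMap.linearEquivOfInjective P hinj (Subspace.dual_finrank_eq).symm
  have he : ∀ f y, P (e.symm f) y = f y := by
    intro f y
    have : e (e.symm f) = f := e.apply_symm_apply f
    exact congrArg (fun f : V →ₗ[ℝ] ℝ => f y) this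
  let core : InnerProductSpace.Core ℝ V :=
    { inner := fun x y => P x y
      conj_inner_symm := fun x y => by simpa using hPs y x
      re_inner_nonneg := fun x => by
        by_cases h : x = 0
        · simp [h]
        · simpa using (hP x h).le
      add_left := fun x y z => by simp
      smul_left := fun x y r => by simp
      definite := fun x hx => by
        by_contra h
        exact (hP x h).ne' hx }
  let : NormedAddCommGroup V := core.toNormedAddCommGroup
  let : InnerProductSpace ℝ V := InnerProductSpace.ofCore core.toCore
  let T : V →ₗ[ℝ] V := e.symm.toLinearMap ∘ₗ B
  have hT : T.IsSymmetric := by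
    intro x y
    change P (e.symm (B x)) y = P x (e.symm (B y))
    rw [hPs x, he, he, hB]
  obtain ⟨c, hc⟩ : ∃ c : ℝ, Module.End.HasEigenvalue T c :=
    ⟨_, hT.hasEigenvalue_iSup_of_finiteDimensional⟩
  obtain ⟨v, hv⟩ := hc.exists_hasEigenvector
  refine ⟨c, v, hv.2, fun w => ?_⟩
  have h := hv.apply_eq_smul
  have h2 : P (T v) w = B v w := he _ _
  rw [← h2, h]
  simp only [map_smul, LinearMap.smul_apply, smul_eq_mul]

section aux
variable {L : Type*} [LieRing L] [LieAlgebra ℝ L]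

/-- A simple ideal: a subspace of it stable under brackets with it is zero or everything. -/
theorem aux_simple (I : LieIdeal ℝ L) (hs : LieAlgebra.IsSimple ℝ ↥I) (p : Submodule ℝ L)
    (hp : ∀ a ∈ I, ∀ x ∈ I, x ∈ p → ⁅a, x⁆ ∈ p) :
    (∀ x ∈ I, x ∈ p → x = 0) ∨ (∀ x ∈ I, x ∈ p) := by
  let J : LieIdeal ℝ ↥I :=
    { (p.comap (LieSubmodule.toSubmodule I).subtype) with
      lie_mem := by
        intro a x hx
        exact hp a.1 a.2 x.1 x.2 hx }
  have hJ : ∀ x : I, x ∈ J ↔ x.1 ∈ p := fun x => Iff.rfl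
  rcases hs.eq_bot_or_eq_top J with h | h
  · left
    intro x hx hxp
    have : (⟨x, hx⟩ : I) ∈ J := hxp
    rw [h, LieSubmodule.mem_bot] at this
    exact congrArg Subtype.val this
  · right
    intro x hx
    have : (⟨x, hx⟩ : I) ∈ J := by rw [h]; exact LieSubmodule.mem_top _
    exact this

theorem aux_nonab (I : LieIdeal ℝ L) (hs : LieAlgebra.IsSimple ℝ ↥I) :
    ∃ x ∈ I, ∃ y ∈ I, ⁅x, y⁆ ≠ 0 := by
  by_contra! h
  apply hs.non_abelian
  refine ⟨fun x y => ?_⟩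
  apply Subtype.ext
  exact h x.1 x.2 y.1 y.2

/-- A simple ideal is orthogonal to its centralizer for any invariant form. -/
theorem aux_orth (I : LieIdeal ℝ L) (hs : LieAlgebra.IsSimple ℝ ↥I) (B : L →ₗ[ℝ] L →ₗ[ℝ] ℝ)
    (hB : ∀ x y z : L, B ⁅x, y⁆ z = B x ⁅y, z⁆) (w : L) (hw : ∀ y ∈ I, ⁅y, w⁆ = 0)
    (x : L) (hx : x ∈ I) : B x w = 0 := by
  have key : ∀ a ∈ I, ∀ x ∈ I, ⁅a, x⁆ ∈ LinearMap.ker (B.flip w) := by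
    intro a _ x hx
    rw [LinearMap.mem_ker, LinearMap.flip_apply, hB, hw x hx, map_zero]
  rcases aux_simple I hs (LinearMap.ker (B.flip w)) (fun a ha x hx _ => key a ha x hx) with h | h
  · obtain ⟨a, ha, b, hb, hab⟩ := aux_nonab I hs
    exact absurd (h _ (lie_mem_right ℝ L I a b hb) (key a ha b hb)) hab
  · exact h x hx

theorem aux_scalar [FiniteDimensional ℝ L] (I : LieIdeal ℝ L) (hs : LieAlgebra.IsSimple ℝ ↥I)
    (hneg : ∀ x ∈ I, x ≠ 0 → killingForm ℝ L x x < 0)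
    (B : L →ₗ[ℝ] L →ₗ[ℝ] ℝ) (hsym : ∀ x y : L, B x y = B y x)
    (hB : ∀ x y z : L, B ⁅x, y⁆ z = B x ⁅y, z⁆) :
    ∃ c : ℝ, ∀ x ∈ I, ∀ y ∈ I, B x y = c * killingForm ℝ L x y := by
  have hK : ∀ x y z : L, killingForm ℝ L ⁅x, y⁆ z = killingForm ℝ L x ⁅y, z⁆ :=
    LieModule.traceForm_apply_lie_apply ℝ L L
  have hKs : ∀ x y : L, killingForm ℝ L x y = killingForm ℝ L y x :=
    LieModule.traceForm_comm ℝ L L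
  let V := (LieSubmodule.toSubmodule I : Submodule ℝ L)
  have hnt : Nontrivial V := by
    obtain ⟨a, ha, b, hb, hab⟩ := aux_nonab I hs
    refine ⟨⟨⟨⁅a, b⁆, lie_mem_right ℝ L I a b hb⟩, 0, fun h => hab ?_⟩⟩
    exact congrArg Subtype.val h
  obtain ⟨c, v, hv, h⟩ := aux_eig (V := V)
    (-(LinearMap.compl₁₂ (killingForm ℝ L) V.subtype V.subtype))
    (LinearMap.compl₁₂ B V.subtype V.subtype)
    (fun x y => by simp [hKs x.1 y.1])
    (fun x hx => by
      have := hneg x.1 x.2 (fun h => hx (Subtype.ext h))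
      simpa using this)
    (fun x y => by simpa using hsym x.1 y.1)
  refine ⟨-c, ?_⟩
  let p : Submodule ℝ L := ⨅ y : V, LinearMap.ker ((B - (-c) • killingForm ℝ L).flip y.1)
  have hp : ∀ x, x ∈ p ↔ ∀ y ∈ I, B x y = -c * killingForm ℝ L x y := by
    intro x
    simp only [p, Submodule.mem_iInf, LinearMap.mem_ker, LinearMap.flip_apply,
      LinearMap.sub_apply, LinearMap.smul_apply, smul_eq_mul, sub_eq_zero]
    exact ⟨fun h y hy => h ⟨y, hy⟩, fun h y => h y.1 y.2⟩
  rcases aux_simple I hs p (by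
    intro a ha x hx hxp
    rw [hp] at hxp ⊢
    intro y hy
    rw [← lie_skew, map_neg, map_neg, LinearMap.neg_apply, LinearMap.neg_apply, hB, hK,
      hxp _ (lie_mem_right ℝ L I a y hy)]
    ring) with h1 | h1
  · exfalso
    apply hv
    apply Subtype.ext
    apply h1 v.1 v.2
    rw [hp]
    intro y hy
    have := h ⟨y, hy⟩
    simp at this
    linarith
  · intro x hx
    exact (hp x).1 (h1 x hx)

end aux

/-- Let `𝔤 = 𝔷(𝔤) ⊕ 𝔤₁ ⊕ ⋯ ⊕ 𝔤ᵣ` with `𝔷(𝔤)` the centre and each `𝔤ᵢ`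
an ideal of `𝔤` which is a simple Lie algebra with negative-definite Killing form, and let
`K̃ᵢ` be the Killing form of `𝔤ᵢ` extended by zero.  Then a symmetric bilinear form `B` on
`𝔤` is invariant iff `B = B₀ + ∑ cᵢ K̃ᵢ` for reals `cᵢ` and a symmetric bilinear form `B₀`
on `𝔷(𝔤)` extended by zero; in particular the `K̃ᵢ` are linearly independent and the space
of invariant symmetric bilinear forms on `𝔤` has dimension `m(m+1)/2 + r` where
`m = dim 𝔷(𝔤)`. -/
theorem stmt10 {L : Type*} [LieRing L] [LieAlgebra ℝ L] [FiniteDimensional ℝ L]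
    (r : ℕ) (g : Fin r → LieIdeal ℝ L)
    (hsimple : ∀ i, LieAlgebra.IsSimple ℝ ↥(g i))
    (hneg : ∀ i, ∀ x ∈ g i, x ≠ 0 → killingForm ℝ L x x < 0)
    (hsup : (LieSubmodule.toSubmodule (LieAlgebra.center ℝ L) : Submodule ℝ L) ⊔
        (⨆ i, (LieSubmodule.toSubmodule (g i) : Submodule ℝ L)) = ⊤)
    (hindep : iSupIndep (fun o : Option (Fin r) =>
      Option.elim o (LieSubmodule.toSubmodule (LieAlgebra.center ℝ L) : Submodule ℝ L)
        (fun i => (LieSubmodule.toSubmodule (g i) : Submodule ℝ L))))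
    (Ktilde : Fin r → (L →ₗ[ℝ] L →ₗ[ℝ] ℝ))
    -- `K̃ᵢ` agrees on `𝔤ᵢ × 𝔤ᵢ` with the Killing form of the ideal `𝔤ᵢ`
    -- (which coincides there with the Killing form of `𝔤`) ...
    (hKt1 : ∀ i, ∀ x ∈ g i, ∀ y ∈ g i, Ktilde i x y = killingForm ℝ L x y)
    -- ... and vanishes as soon as one argument lies in `𝔷(𝔤)` or in some `𝔤ⱼ`, `j ≠ i`
    (hKt2 : ∀ i, ∀ x y : L,
      (x ∈ LieAlgebra.center ℝ L ∨ ∃ j, j ≠ i ∧ x ∈ g j) → Ktilde i x y = 0)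
    (hKt3 : ∀ i, ∀ x y : L, Ktilde i x y = Ktilde i y x) :
    (∀ B : L →ₗ[ℝ] L →ₗ[ℝ] ℝ, (∀ x y : L, B x y = B y x) →
      ((∀ x y z : L, B ⁅x, y⁆ z = B x ⁅y, z⁆) ↔
        ∃ (c : Fin r → ℝ) (B₀ : L →ₗ[ℝ] L →ₗ[ℝ] ℝ),
          (∀ x y : L, B₀ x y = B₀ y x) ∧
          (∀ x y : L, (∃ i, x ∈ g i) → B₀ x y = 0 ∧ B₀ y x = 0) ∧
          B = B₀ + ∑ i, c i • Ktilde i)) ∧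
    LinearIndependent ℝ Ktilde ∧
    Module.finrank ℝ ↥(invSymmForms L) =
      (Module.finrank ℝ ↥(LieSubmodule.toSubmodule (LieAlgebra.center ℝ L)) *
        (Module.finrank ℝ ↥(LieSubmodule.toSubmodule (LieAlgebra.center ℝ L)) + 1)) / 2
        + r := by
  classical
  have hKs : ∀ x y : L, killingForm ℝ L x y = killingForm ℝ L y x :=
    LieModule.traceForm_comm ℝ L L
  have hKi : ∀ x y z : L, killingForm ℝ L ⁅x, y⁆ z = killingForm ℝ L x ⁅y, z⁆ :=
    LieModule.traceForm_apply_lie_apply ℝ L L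
  have hZr : ∀ z ∈ LieAlgebra.center ℝ L, ∀ x : L, ⁅x, z⁆ = 0 := fun z hz =>
    (LieModule.mem_maxTrivSubmodule ℝ L L z).1 hz
  have hZl : ∀ z ∈ LieAlgebra.center ℝ L, ∀ x : L, ⁅z, x⁆ = 0 := fun z hz x => by
    rw [← lie_skew, hZr z hz, neg_zero]
  have hgr : ∀ i, ∀ x ∈ g i, ∀ a : L, ⁅a, x⁆ ∈ g i := fun i x hx a =>
    lie_mem_right ℝ L (g i) a x hx
  have hgl : ∀ i, ∀ x ∈ g i, ∀ a : L, ⁅x, a⁆ ∈ g i := fun i x hx a =>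
    lie_mem_left ℝ L (g i) x a hx
  have hgg : ∀ i j, i ≠ j → ∀ x ∈ g i, ∀ y ∈ g j, ⁅x, y⁆ = 0 := by
    intro i j hij x hx y hy
    have hd := hindep.pairwiseDisjoint (show (some i) ≠ some j by simpa using hij)
    exact Submodule.disjoint_def.1 hd _ (hgl i x hx y) (hgr j y hy x)
  have hind : ∀ P : L → Prop, (∀ z ∈ LieAlgebra.center ℝ L, P z) → (∀ i, ∀ x ∈ g i, P x) →
      (∀ x y, P x → P y → P (x + y)) → ∀ x, P x := by
    intro P h1 h2 h3 x
    have hx : x ∈ (LieSubmodule.toSubmodule (LieAlgebra.center ℝ L) : Submodule ℝ L) ⊔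
        (⨆ i, (LieSubmodule.toSubmodule (g i) : Submodule ℝ L)) := by rw [hsup]; trivial
    obtain ⟨y, hy, z, hz, rfl⟩ := Submodule.mem_sup.1 hx
    refine h3 _ _ (h1 y hy) ?_
    exact Submodule.iSup_induction _ (motive := P) hz h2 (h1 0 (zero_mem _)) h3
  have hvex : ∀ i, ∃ v ∈ g i, v ≠ 0 := by
    intro i
    obtain ⟨a, ha, b, hb, hab⟩ := aux_nonab (g i) (hsimple i)
    exact ⟨_, hgr i b hb a, hab⟩
  choose v hv hv0 using hvex
  have hKv : ∀ i, killingForm ℝ L (v i) (v i) ≠ 0 := fun i => (hneg i _ (hv i) (hv0 i)).ne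
  have hKtv : ∀ (c : Fin r → ℝ) k, (∑ i, c i • Ktilde i) (v k) (v k) =
      c k * killingForm ℝ L (v k) (v k) := by
    intro c k
    simp only [LinearMap.sum_apply, LinearMap.smul_apply, smul_eq_mul]
    rw [Finset.sum_eq_single k]
    · rw [hKt1 k _ (hv k) _ (hv k)]
    · intro b _ hb
      rw [hKt2 b _ _ (Or.inr ⟨k, hb.symm, hv k⟩), mul_zero]
    · simp
  -- invariance of `K̃ᵢ`
  have hKtinv : ∀ i, ∀ x y z : L, Ktilde i ⁅x, y⁆ z = Ktilde i x ⁅y, z⁆ := by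
    intro i
    have hZ : ∀ x ∈ LieAlgebra.center ℝ L, ∀ y, Ktilde i x y = 0 := fun x hx y =>
      hKt2 i x y (Or.inl hx)
    have hG : ∀ j, j ≠ i → ∀ x ∈ g j, ∀ y, Ktilde i x y = 0 := fun j hj x hx y =>
      hKt2 i x y (Or.inr ⟨j, hj, hx⟩)
    refine hind _ ?_ ?_ ?_
    · intro x hx y z
      rw [hZl x hx, hZ x hx]; simp
    · intro j x hx
      by_cases hj : j = i
      · subst hj
        refine hind _ ?_ ?_ ?_
        · intro y hy z
          rw [hZr y hy, hZl y hy]; simp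
        · intro k y hy
          by_cases hk : k = j
          · subst hk
            refine hind _ ?_ ?_ ?_
            · intro z hz
              rw [hZr z hz, hKt3, hZ z hz]; simp
            · intro l z hz
              by_cases hl : l = k
              · subst hl
                rw [hKt1 l _ (hgr l y hy x) _ hz, hKt1 l _ hx _ (hgr l z hz y), hKi]
              · rw [hKt3, hG l hl z hz, hgg k l (Ne.symm hl) y hy z hz]; simp
            · intro a b ha hb
              simp only [lie_add, map_add, ha, hb]
          · intro z
            rw [hgg j k (Ne.symm hk) x hx y hy, hKt3 j x, hG k hk _ (hgl k y hy z)]; simp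
        · intro a b ha hb z
          simp only [lie_add, add_lie, map_add, LinearMap.add_apply, ha, hb]
      · intro y z
        rw [hG j hj _ (hgl j x hx y), hG j hj x hx]
    · intro a b ha hb y z
      simp only [add_lie, map_add, LinearMap.add_apply, ha, hb]
  -- invariance of `B₀`
  have hB0inv : ∀ B₀ : L →ₗ[ℝ] L →ₗ[ℝ] ℝ,
      (∀ x y : L, (∃ i, x ∈ g i) → B₀ x y = 0 ∧ B₀ y x = 0) →
      ∀ x y z : L, B₀ ⁅x, y⁆ z = B₀ x ⁅y, z⁆ := by
    intro B₀ h0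
    have hl : ∀ x y z : L, B₀ ⁅x, y⁆ z = 0 := by
      refine hind _ ?_ ?_ ?_
      · intro x hx y z
        rw [hZl x hx]; simp
      · intro j x hx y z
        exact (h0 _ _ ⟨j, hgl j x hx y⟩).1
      · intro a b ha hb y z
        simp only [add_lie, map_add, LinearMap.add_apply, ha, hb, add_zero]
    have hr : ∀ y x z : L, B₀ x ⁅y, z⁆ = 0 := by
      refine hind _ ?_ ?_ ?_
      · intro x hx y z
        rw [hZl x hx]; simp
      · intro j x hx y z
        exact (h0 _ _ ⟨j, hgl j x hx z⟩).2
      · intro a b ha hb y z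
        simp only [add_lie, map_add, ha, hb, add_zero]
    intro x y z
    rw [hl, hr]
  have hsuminv : ∀ (c : Fin r → ℝ) (B₀ : L →ₗ[ℝ] L →ₗ[ℝ] ℝ),
      (∀ x y : L, (∃ i, x ∈ g i) → B₀ x y = 0 ∧ B₀ y x = 0) →
      ∀ x y z : L, (B₀ + ∑ i, c i • Ktilde i) ⁅x, y⁆ z = (B₀ + ∑ i, c i • Ktilde i) x ⁅y, z⁆ := by
    intro c B₀ h0 x y z
    simp only [LinearMap.add_apply, LinearMap.sum_apply, LinearMap.smul_apply, hKtinv,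
      hB0inv B₀ h0 x y z]
  have hfwd : ∀ B : L →ₗ[ℝ] L →ₗ[ℝ] ℝ, (∀ x y : L, B x y = B y x) →
      (∀ x y z : L, B ⁅x, y⁆ z = B x ⁅y, z⁆) →
        ∃ (c : Fin r → ℝ) (B₀ : L →ₗ[ℝ] L →ₗ[ℝ] ℝ),
          (∀ x y : L, B₀ x y = B₀ y x) ∧
          (∀ x y : L, (∃ i, x ∈ g i) → B₀ x y = 0 ∧ B₀ y x = 0) ∧
          B = B₀ + ∑ i, c i • Ktilde i := by
    intro B hsym hinv
    choose c hc using fun i => aux_scalar (g i) (hsimple i) (hneg i) B hsym hinv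
    have hs0 : ∀ x y : L, (B - ∑ i, c i • Ktilde i) x y = (B - ∑ i, c i • Ktilde i) y x := by
      intro x y
      simp only [LinearMap.sub_apply, LinearMap.sum_apply, LinearMap.smul_apply]
      rw [hsym x y]
      congr 1
      exact Finset.sum_congr rfl fun i _ => by rw [hKt3 i x y]
    have h0 : ∀ i, ∀ x ∈ g i, ∀ y, (B - ∑ i, c i • Ktilde i) x y = 0 := by
      intro i x hx
      have hred : ∀ y, (B - ∑ i, c i • Ktilde i) x y = B x y - c i * Ktilde i x y := by
        intro y
        simp only [LinearMap.sub_apply, LinearMap.sum_apply, LinearMap.smul_apply, smul_eq_mul]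
        rw [Finset.sum_eq_single i]
        · intro b _ hb
          rw [hKt2 b _ _ (Or.inr ⟨i, hb.symm, hx⟩), mul_zero]
        · simp
      refine hind _ ?_ ?_ ?_
      · intro z hz
        rw [hred, hKt3, hKt2 i z x (Or.inl hz),
          aux_orth (g i) (hsimple i) B hinv z (fun y _ => hZr z hz y) x hx]
        simp
      · intro j y hy
        rw [hred]
        by_cases hj : j = i
        · subst hj
          rw [hc j x hx y hy, hKt1 j x hx y hy, sub_self]
        · rw [hKt3, hKt2 i y x (Or.inr ⟨j, hj, hy⟩),
            aux_orth (g i) (hsimple i) B hinv y (fun a ha => hgg i j (Ne.symm hj) a ha y hy) x hx]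
          simp
      · intro a b ha hb
        rw [map_add, ha, hb, add_zero]
    refine ⟨c, B - ∑ i, c i • Ktilde i, hs0, ?_, by abel⟩
    rintro x y ⟨i, hx⟩
    exact ⟨h0 i x hx y, by rw [hs0, h0 i x hx y]⟩
  refine ⟨fun B hsym => ⟨hfwd B hsym, ?_⟩, ?_, ?_⟩
  · rintro ⟨c, B₀, -, h0, rfl⟩
    exact hsuminv c B₀ h0
  · rw [Fintype.linearIndependent_iffₛ]
    intro c d hc k
    have := hKtv c k
    rw [hc, hKtv d k] at this
    exact (mul_right_cancel₀ (hKv k) this).symm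
  · -- dimension
    set Z : Submodule ℝ L := LieSubmodule.toSubmodule (LieAlgebra.center ℝ L) with hZdef
    set G : Submodule ℝ L := ⨆ i, (LieSubmodule.toSubmodule (g i) : Submodule ℝ L) with hGdef
    have hcompl : IsCompl Z G := by
      refine ⟨?_, codisjoint_iff.2 hsup⟩
      refine (hindep none).mono_right ?_
      refine iSup_le fun i => ?_
      exact le_iSup₂_of_le (f := fun (j : Option (Fin r)) (_ : j ≠ none) =>
        Option.elim j (LieSubmodule.toSubmodule (LieAlgebra.center ℝ L) : Submodule ℝ L)
        (fun i => (LieSubmodule.toSubmodule (g i) : Submodule ℝ L))) (some i) (by simp) le_rfl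
    let n := Module.finrank ℝ Z
    let b : Module.Basis (Fin n) ℝ Z := Module.finBasis ℝ Z
    let Φ : invSymmForms L →ₗ[ℝ] (Sym2 (Fin n) → ℝ) × (Fin r → ℝ) :=
      { toFun := fun B => (Sym2.lift ⟨fun i j => B.1 (b i).1 (b j).1, fun i j => B.2.2 _ _⟩,
          fun k => B.1 (v k) (v k))
        map_add' := by
          intro B C
          refine Prod.ext (funext fun s => ?_) (funext fun k => ?_)
          · induction s with | _ i j => simp
          · simp
        map_smul' := by
          intro a B
          refine Prod.ext (funext fun s => ?_) (funext fun k => ?_)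
          · induction s with | _ i j => simp
          · simp }
    have hΦ1 : ∀ B i j, (Φ B).1 s(i, j) = B.1 (b i).1 (b j).1 := fun B i j => rfl
    have hΦ2 : ∀ B k, (Φ B).2 k = B.1 (v k) (v k) := fun B k => rfl
    have hker : ∀ B : invSymmForms L, Φ B = 0 → ∀ x y, B.1 x y = 0 := by
      intro B hB
      have h1 : ∀ i j, B.1 (b i).1 (b j).1 = 0 := fun i j => by rw [← hΦ1, hB]; rfl
      have h2 : ∀ k, B.1 (v k) (v k) = 0 := fun k => by rw [← hΦ2, hB]; rfl
      obtain ⟨c, B₀, hs, h0, hBe⟩ := hfwd B.1 B.2.2 B.2.1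
      have hc : c = 0 := by
        funext k
        have h3 := h2 k
        rw [hBe, LinearMap.add_apply, LinearMap.add_apply, hKtv, (h0 _ _ ⟨k, hv k⟩).1,
          zero_add] at h3
        simpa [hKv k] using h3
      have hBe' : B.1 = B₀ := by rw [hBe, hc]; simp
      have hZ0 : LinearMap.compl₁₂ B₀ Z.subtype Z.subtype = 0 := by
        refine b.ext fun i => b.ext fun j => ?_
        have := h1 i j
        rw [hBe'] at this
        simpa using this
      rw [hBe']
      refine hind _ ?_ ?_ ?_
      · intro x hx
        refine hind _ ?_ ?_ ?_
        · intro y hy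
          exact congrArg (fun F : Z →ₗ[ℝ] Z →ₗ[ℝ] ℝ => F ⟨x, hx⟩ ⟨y, hy⟩) hZ0
        · intro i y hy
          exact (h0 y x ⟨i, hy⟩).2
        · intro a b ha hb
          rw [map_add, ha, hb, add_zero]
      · intro i x hx y
        exact (h0 x y ⟨i, hx⟩).1
      · intro a b ha hb y
        rw [map_add, LinearMap.add_apply, ha, hb, add_zero]
    have hinj : Function.Injective Φ := by
      intro B C hBC
      have h := hker (B + (-1 : ℝ) • C) (by rw [map_add, map_smul, hBC]; simp)
      apply Subtype.ext
      refine LinearMap.ext fun x => LinearMap.ext fun y => ?_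
      have h2 := h x y
      simp only [Submodule.coe_add, Submodule.coe_smul, LinearMap.add_apply,
        LinearMap.smul_apply, smul_eq_mul] at h2
      linarith
    have hsurj : Function.Surjective Φ := by
      rintro ⟨f, d⟩
      let pr : L →ₗ[ℝ] Z := Z.projectionOnto G hcompl
      have hpr0 : ∀ i, ∀ x ∈ g i, pr x = 0 := by
        intro i x hx
        have : x ∈ G := Submodule.mem_iSup_of_mem i hx
        rw [← LinearMap.mem_ker]
        simpa [pr] using this
      have hprZ : ∀ z : Z, pr z.1 = z := fun z => Submodule.projectionOnto_apply_left hcompl z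
      let F : Z →ₗ[ℝ] Z →ₗ[ℝ] ℝ := Matrix.toLinearMap₂ b b (Matrix.of fun i j => f s(i, j))
      have hF : ∀ i j, F (b i) (b j) = f s(i, j) := by
        intro i j
        exact Matrix.toLinearMap₂_apply_basis b b _ i j
      have hFs : ∀ x y, F x y = F y x := by
        have : F = F.flip := by
          refine b.ext fun i => b.ext fun j => ?_
          rw [LinearMap.flip_apply, hF, hF, Sym2.eq_swap]
        intro x y
        conv_lhs => rw [this]
        rfl
      let B₀ : L →ₗ[ℝ] L →ₗ[ℝ] ℝ := LinearMap.compl₁₂ F pr pr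
      have hB₀ : ∀ x y, B₀ x y = F (pr x) (pr y) := fun x y => rfl
      have h0 : ∀ x y : L, (∃ i, x ∈ g i) → B₀ x y = 0 ∧ B₀ y x = 0 := by
        rintro x y ⟨i, hx⟩
        rw [hB₀, hB₀, hpr0 i x hx]
        simp
      let c : Fin r → ℝ := fun k => d k / killingForm ℝ L (v k) (v k)
      refine ⟨⟨B₀ + ∑ i, c i • Ktilde i, hsuminv c B₀ h0, ?_⟩, ?_⟩
      · intro x y
        simp only [LinearMap.add_apply, LinearMap.sum_apply, LinearMap.smul_apply]
        rw [hB₀, hB₀, hFs]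
        congr 1
        exact Finset.sum_congr rfl fun i _ => by rw [hKt3 i x y]
      · refine Prod.ext (funext fun s => ?_) (funext fun k => ?_)
        · induction s with | _ i j =>
          rw [hΦ1]
          simp only [LinearMap.add_apply, LinearMap.sum_apply, LinearMap.smul_apply]
          rw [hB₀, hprZ, hprZ, hF, Finset.sum_eq_zero, add_zero]
          intro k _
          rw [hKt2 k _ _ (Or.inl (b i).2), smul_zero]
        · rw [hΦ2]
          simp only [LinearMap.add_apply]
          rw [hKtv, (h0 _ _ ⟨k, hv k⟩).1, zero_add]
          exact div_mul_cancel₀ _ (hKv k)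
    rw [(LinearEquiv.ofBijective Φ ⟨hinj, hsurj⟩).finrank_eq, Module.finrank_prod,
      Module.finrank_fintype_fun_eq_card, Module.finrank_fintype_fun_eq_card, Sym2.card,
      Nat.choose_two_right, Fintype.card_fin, Fintype.card_fin, Nat.add_sub_cancel, mul_comm]
end

section
/- Let 𝔤 = 𝔤₁ ⊕ ⋯ ⊕ 𝔤_r be a finite-dimensional real Lie algebra that is the direct sum of ideals 𝔤₁, …, 𝔤_r, each of which is a simple Lie algebra with negative-definite Killing form. Let Γ be a group acting on 𝔤 by Lie algebra automorphisms, and suppose the action permutes the simple ideals: for every γ ∈ Γ and every i there is an index σ_γ(i) with γ(𝔤ᵢ) = 𝔤_{σ_γ(i)}. Then the real vector space of symmetric bilinear forms on 𝔤 that are both invariant and Γ-invariant (B(γx, γy) = B(x,y) for all γ ∈ Γ) has dimension equal to the number of orbits of the induced action of Γ on the set {𝔤₁, …, 𝔤_r} of simple ideals. -/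
/-- The space of bilinear forms on a real Lie algebra `L` which are invariant, symmetric,
and invariant under a family `ρ` of Lie algebra automorphisms of `L`. -/
noncomputable def invSymmEquivForms (L : Type*) [LieRing L] [LieAlgebra ℝ L]
    {Γ : Type*} (ρ : Γ → (L ≃ₗ⁅ℝ⁆ L)) :
    Submodule ℝ (L →ₗ[ℝ] L →ₗ[ℝ] ℝ) where
  carrier := {B | (∀ x y z : L, B ⁅x, y⁆ z = B x ⁅y, z⁆) ∧ (∀ x y : L, B x y = B y x) ∧
    ∀ γ : Γ, ∀ x y : L, B (ρ γ x) (ρ γ y) = B x y}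
  add_mem' := by
    rintro B C ⟨hB1, hB2, hB3⟩ ⟨hC1, hC2, hC3⟩
    exact ⟨fun x y z => by simp [hB1 x y z, hC1 x y z],
      fun x y => by simp [hB2 x y, hC2 x y],
      fun γ x y => by simp [hB3 γ x y, hC3 γ x y]⟩
  zero_mem' := ⟨fun _ _ _ => by simp, fun _ _ => by simp, fun _ _ _ => by simp⟩
  smul_mem' := by
    rintro c B ⟨h1, h2, h3⟩
    exact ⟨fun x y z => by simp [h1 x y z], fun x y => by simp [h2 x y],
      fun γ x y => by simp [h3 γ x y]⟩

theorem exists_common_eigenvector {V : Type*} [AddCommGroup V] [Module ℝ V]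
    [FiniteDimensional ℝ V] [Nontrivial V] (K B : V →ₗ[ℝ] V →ₗ[ℝ] ℝ)
    (hK : ∀ x y, K x y = K y x) (hB : ∀ x y, B x y = B y x)
    (hpos : ∀ x, x ≠ 0 → 0 < K x x) :
    ∃ c : ℝ, ∃ x : V, x ≠ 0 ∧ ∀ y, B x y = c * K x y := by
  let core : InnerProductSpace.Core ℝ V :=
    { inner := fun x y => K x y
      conj_inner_symm := fun x y => by simpa using hK y x
      re_inner_nonneg := fun x => by
        by_cases h : x = 0
        · simp [h]
        · simpa using (hpos x h).le
      add_left := fun x y z => by simp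
      smul_left := fun x y r => by simp
      definite := fun x h => by
        by_contra h0
        exact (hpos x h0).ne' h }
  letI : NormedAddCommGroup V := core.toNormedAddCommGroup
  letI : InnerProductSpace ℝ V := InnerProductSpace.ofCore core.toCore
  have hinj : Function.Injective K := by
    rw [injective_iff_map_eq_zero]
    intro x hx
    by_contra h0
    have := hpos x h0
    rw [hx] at this
    simp at this
  let e : V ≃ₗ[ℝ] Module.Dual ℝ V :=
    LinearMap.linearEquivOfInjective K hinj Subspace.dual_finrank_eq.symm
  let T : V →ₗ[ℝ] V := e.symm.toLinearMap.comp B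
  have hT : ∀ x y, K (T x) y = B x y := by
    intro x y
    change e (e.symm (B x)) y = _
    rw [LinearEquiv.apply_symm_apply]
  have hsymm : T.IsSymmetric := by
    intro x y
    change K (T x) y = K x (T y)
    rw [hT, hK, hT, hB]
  obtain ⟨c, hc⟩ : ∃ c : ℝ, Module.End.HasEigenvalue T c :=
    ⟨_, hsymm.hasEigenvalue_iSup_of_finiteDimensional⟩
  obtain ⟨x, hx⟩ := hc.exists_hasEigenvector
  refine ⟨c, x, hx.2, fun y => ?_⟩
  have h1 := hx.apply_eq_smul
  rw [← hT, h1, map_smul, LinearMap.smul_apply, smul_eq_mul]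

theorem nontrivial_of_simple (M : Type*) [LieRing M] [LieAlgebra ℝ M]
    (hs : LieAlgebra.IsSimple ℝ M) : Nontrivial M := by
  by_contra h
  rw [not_nontrivial_iff_subsingleton] at h
  exact hs.non_abelian ⟨fun x y => Subsingleton.elim _ _⟩

theorem exists_scalar_of_simple {M : Type*} [LieRing M] [LieAlgebra ℝ M]
    [FiniteDimensional ℝ M] (hs : LieAlgebra.IsSimple ℝ M) (K B : M →ₗ[ℝ] M →ₗ[ℝ] ℝ)
    (hK : ∀ x y, K x y = K y x) (hB : ∀ x y, B x y = B y x)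
    (hKi : ∀ x y z : M, K ⁅x, y⁆ z = K x ⁅y, z⁆)
    (hBi : ∀ x y z : M, B ⁅x, y⁆ z = B x ⁅y, z⁆)
    (hneg : ∀ x, x ≠ 0 → K x x < 0) :
    ∃ c : ℝ, ∀ x y, B x y = c * K x y := by
  haveI := nontrivial_of_simple M hs
  obtain ⟨c, x, hx0, hx⟩ := exists_common_eigenvector (-K) B (fun x y => by simp [hK x y]) hB
    (fun x h => by simpa using hneg x h)
  let I : LieIdeal ℝ M :=
    { LinearMap.ker (B + c • K) with
      lie_mem := by
        intro a m hm
        change (B + c • K) m = 0 at hm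
        change (B + c • K) ⁅a, m⁆ = 0
        ext y
        have h := LinearMap.congr_fun hm ⁅a, y⁆
        simp only [LinearMap.add_apply, LinearMap.smul_apply, LinearMap.zero_apply] at h ⊢
        rw [← lie_skew a m, map_neg, map_neg, LinearMap.neg_apply, LinearMap.neg_apply,
          hBi, hKi, smul_neg, ← neg_add, h, neg_zero] }
  have hmem : ∀ z, z ∈ I ↔ (B + c • K) z = 0 := fun z => Iff.rfl
  have hxI : x ∈ I := by
    rw [hmem]
    ext y
    simp [hx y]
  rcases hs.eq_bot_or_eq_top I with h | h
  · rw [h] at hxI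
    exact absurd ((LieSubmodule.mem_bot _).1 hxI) hx0
  · refine ⟨-c, fun z y => ?_⟩
    have hz : z ∈ I := by rw [h]; exact LieSubmodule.mem_top _
    have := LinearMap.congr_fun ((hmem z).1 hz) y
    simp at this
    linarith

theorem simple_functional {M : Type*} [LieRing M] [LieAlgebra ℝ M]
    (hs : LieAlgebra.IsSimple ℝ M) (f : M →ₗ[ℝ] ℝ) (hf : ∀ x y : M, f ⁅x, y⁆ = 0) :
    f = 0 := by
  let I : LieIdeal ℝ M :=
    { LinearMap.ker f with
      lie_mem := fun {a m} _ => hf a m }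
  have hmem : ∀ z, z ∈ I ↔ f z = 0 := fun z => Iff.rfl
  rcases hs.eq_bot_or_eq_top I with h | h
  · exact absurd ⟨fun x y => by
      have : ⁅x, y⁆ ∈ I := (hmem _).2 (hf x y)
      rw [h] at this
      exact (LieSubmodule.mem_bot _).1 this⟩ hs.non_abelian
  · ext z
    exact (hmem z).1 (by rw [h]; exact LieSubmodule.mem_top _)

theorem inv_form_orth {L : Type*} [LieRing L] [LieAlgebra ℝ L]
    (I J : LieIdeal ℝ L) (hs : LieAlgebra.IsSimple ℝ ↥I) (hIJ : ∀ x, x ∈ I → x ∈ J → x = 0)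
    (B : L →ₗ[ℝ] L →ₗ[ℝ] ℝ) (hBi : ∀ x y z : L, B ⁅x, y⁆ z = B x ⁅y, z⁆)
    {x y : L} (hx : x ∈ I) (hy : y ∈ J) : B x y = 0 := by
  have := simple_functional hs ((B.flip y).comp (LieSubmodule.toSubmodule I).subtype) (by
    intro a b
    change B ⁅(a : L), (b : L)⁆ y = 0
    rw [hBi, hIJ ⁅(b : L), y⁆ ?_ ?_, map_zero]
    · rw [← lie_skew]
      exact neg_mem (I.lie_mem b.2)
    · exact J.lie_mem hy)
  exact LinearMap.congr_fun this ⟨x, hx⟩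

/-- Let `𝔤 = 𝔤₁ ⊕ ⋯ ⊕ 𝔤ᵣ` be a direct sum of ideals, each a simple Lie
algebra with negative-definite Killing form, and let a group `Γ` act on `𝔤` by Lie algebra
automorphisms permuting the simple ideals.  Then the space of symmetric bilinear forms on
`𝔤` that are both invariant and `Γ`-invariant has dimension equal to the number of orbits
of the induced action of `Γ` on the set of simple ideals `{𝔤₁, …, 𝔤ᵣ}`. -/
theorem stmt11 {L : Type*} [LieRing L] [LieAlgebra ℝ L] [FiniteDimensional ℝ L]
    (r : ℕ) (g : Fin r → LieIdeal ℝ L)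
    (hsimple : ∀ i, LieAlgebra.IsSimple ℝ ↥(g i))
    (hneg : ∀ i, ∀ x ∈ g i, x ≠ 0 → killingForm ℝ L x x < 0)
    (hsup : (⨆ i, (LieSubmodule.toSubmodule (g i) : Submodule ℝ L)) = ⊤)
    (hindep : iSupIndep (fun i => (LieSubmodule.toSubmodule (g i) : Submodule ℝ L)))
    {Γ : Type*} [Group Γ] (ρ : Γ → (L ≃ₗ⁅ℝ⁆ L))
    (hone : ∀ x : L, ρ 1 x = x)
    (hmul : ∀ γ₁ γ₂ : Γ, ∀ x : L, ρ (γ₁ * γ₂) x = ρ γ₁ (ρ γ₂ x))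
    (hperm : ∀ γ : Γ, ∀ i : Fin r, ∃ j : Fin r,
      Submodule.map ((ρ γ).toLinearEquiv : L →ₗ[ℝ] L)
          (LieSubmodule.toSubmodule (g i) : Submodule ℝ L) =
        (LieSubmodule.toSubmodule (g j) : Submodule ℝ L)) :
    Module.finrank ℝ ↥(invSymmEquivForms L ρ) =
      Nat.card ↥(Set.range (fun i : Fin r => {j : Fin r | ∃ γ : Γ,
        Submodule.map ((ρ γ).toLinearEquiv : L →ₗ[ℝ] L)
            (LieSubmodule.toSubmodule (g i) : Submodule ℝ L) =
          (LieSubmodule.toSubmodule (g j) : Submodule ℝ L)})) := by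
  classical
  set A : Fin r → Submodule ℝ L := fun i => LieSubmodule.toSubmodule (g i) with hA
  set orb : Fin r → Set (Fin r) := fun i => {j : Fin r | ∃ γ : Γ,
        Submodule.map ((ρ γ).toLinearEquiv : L →ₗ[ℝ] L) (A i) = A j} with horb
  -- extend statements from the pieces
  have hind : ∀ (p : L → Prop), (∀ i, ∀ x ∈ g i, p x) → p 0 →
      (∀ x y, p x → p y → p (x + y)) → ∀ x, p x := by
    intro p h1 h2 h3 x
    have hx : x ∈ ⨆ i, A i := by rw [hsup]; trivial
    exact Submodule.iSup_induction A (motive := p) hx h1 h2 h3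
  have hκs : ∀ x y : L, killingForm ℝ L x y = killingForm ℝ L y x :=
    LieModule.traceForm_comm ℝ L L
  have hκi : ∀ x y z : L, killingForm ℝ L ⁅x, y⁆ z = killingForm ℝ L x ⁅y, z⁆ :=
    LieModule.traceForm_apply_lie_apply ℝ L L
  have hκρ : ∀ (γ : Γ) (x y : L),
      killingForm ℝ L (ρ γ x) (ρ γ y) = killingForm ℝ L x y := fun γ x y =>
    LieAlgebra.killingForm_of_equiv_apply (ρ γ) x y
  have hdisj : ∀ i j, i ≠ j → ∀ x, x ∈ g i → x ∈ g j → x = 0 := by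
    intro i j hij x hi hj
    exact (Submodule.disjoint_def.1 (hindep.pairwiseDisjoint hij)) x hi hj
  have horth : ∀ B : L →ₗ[ℝ] L →ₗ[ℝ] ℝ, (∀ x y z : L, B ⁅x, y⁆ z = B x ⁅y, z⁆) →
      ∀ i j, i ≠ j → ∀ x ∈ g i, ∀ y ∈ g j, B x y = 0 := fun B hB i j hij x hx y hy =>
    inv_form_orth (g i) (g j) (hsimple i) (hdisj i j hij) B hB hx hy
  have hne : ∀ i, ∃ x ∈ g i, x ≠ 0 := by
    intro i
    haveI := nontrivial_of_simple _ (hsimple i)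
    obtain ⟨x, hx⟩ := exists_ne (0 : ↥(g i))
    exact ⟨x, x.2, fun h => hx (Subtype.ext h)⟩
  -- orbits
  have hcomp : ∀ γ δ : Γ, ∀ i j k, Submodule.map ((ρ γ).toLinearEquiv : L →ₗ[ℝ] L) (A i) = A j →
      Submodule.map ((ρ δ).toLinearEquiv : L →ₗ[ℝ] L) (A j) = A k →
      Submodule.map ((ρ (δ * γ)).toLinearEquiv : L →ₗ[ℝ] L) (A i) = A k := by
    intro γ δ i j k h1 h2
    rw [← h2, ← h1, ← Submodule.map_comp]
    congr 1
    ext x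
    exact hmul δ γ x
  have hinv : ∀ γ : Γ, ∀ i j, Submodule.map ((ρ γ).toLinearEquiv : L →ₗ[ℝ] L) (A i) = A j →
      Submodule.map ((ρ γ⁻¹).toLinearEquiv : L →ₗ[ℝ] L) (A j) = A i := by
    intro γ i j h1
    rw [← h1, ← Submodule.map_comp]
    have : ((ρ γ⁻¹).toLinearEquiv : L →ₗ[ℝ] L) ∘ₗ ((ρ γ).toLinearEquiv : L →ₗ[ℝ] L)
        = LinearMap.id := by
      ext x
      have := hmul γ⁻¹ γ x
      rw [inv_mul_cancel, hone] at this
      exact this.symm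
    rw [this, Submodule.map_id]
  have horb1 : ∀ i, i ∈ orb i := by
    intro i
    refine ⟨1, ?_⟩
    have : ((ρ 1).toLinearEquiv : L →ₗ[ℝ] L) = LinearMap.id := by
      ext x
      exact hone x
    rw [this, Submodule.map_id]
  have horb2 : ∀ γ : Γ, ∀ i j, Submodule.map ((ρ γ).toLinearEquiv : L →ₗ[ℝ] L) (A i) = A j →
      orb i = orb j := by
    intro γ i j h
    ext k
    constructor
    · rintro ⟨δ, hδ⟩
      exact ⟨δ * γ⁻¹, hcomp _ _ _ _ _ (hinv γ i j h) hδ⟩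
    · rintro ⟨δ, hδ⟩
      exact ⟨δ * γ, hcomp _ _ _ _ _ h hδ⟩
  -- projections
  have hint : DirectSum.IsInternal A :=
    DirectSum.isInternal_submodule_of_iSupIndep_of_iSup_eq_top hindep hsup
  have hP : ∀ i, ∃ P : L →ₗ[ℝ] L, (∀ x ∈ g i, P x = x) ∧ ∀ j, j ≠ i → ∀ x ∈ g j, P x = 0 := by
    intro i
    refine ⟨(A i).subtype ∘ₗ DirectSum.component ℝ (Fin r) (fun i => A i) i ∘ₗ
      (LinearEquiv.ofBijective (DirectSum.coeLinearMap A) hint).symm.toLinearMap, ?_, ?_⟩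
    · intro x hx
      exact congrArg Subtype.val (hint.ofBijective_coeLinearMap_of_mem (i := i) hx)
    · intro j hj x hx
      exact congrArg Subtype.val (hint.ofBijective_coeLinearMap_of_mem_ne (i := j) (j := i) hj hx)
  choose P hP1 hP2 using hP
  let q : Fin r → Set.range orb := fun i => ⟨orb i, i, rfl⟩
  let T : (Set.range orb → ℝ) → (L →ₗ[ℝ] L) := fun f => ∑ i, f (q i) • P i
  have hT : ∀ f i, ∀ x ∈ g i, T f x = f (q i) • x := by
    intro f i x hx
    simp only [T, LinearMap.sum_apply, LinearMap.smul_apply]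
    rw [Finset.sum_eq_single i]
    · rw [hP1 i x hx]
    · intro j _ hj
      rw [hP2 j i hj.symm x hx, smul_zero]
    · simp
  have hTlie : ∀ f (x y : L), T f ⁅x, y⁆ = ⁅T f x, y⁆ := by
    intro f x y
    refine hind (fun x => T f ⁅x, y⁆ = ⁅T f x, y⁆) ?_ (by simp) ?_ x
    · intro i x hx
      have h : ⁅x, y⁆ ∈ g i := by
        rw [← lie_skew]
        exact neg_mem ((g i).lie_mem hx)
      rw [hT f i x hx, hT f i _ h, smul_lie]
    · intro a b ha hb
      rw [add_lie, map_add, map_add, add_lie, ha, hb]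
  have hTρ : ∀ f γ (x : L), T f (ρ γ x) = ρ γ (T f x) := by
    intro f γ x
    refine hind (fun x => T f (ρ γ x) = ρ γ (T f x)) ?_ (by simp) ?_ x
    · intro i x hx
      obtain ⟨j, hj⟩ := hperm γ i
      have h : ρ γ x ∈ A j := by
        rw [show A j = _ from hj.symm]
        exact ⟨x, hx, rfl⟩
      have hq : q i = q j := Subtype.ext (horb2 γ i j hj)
      rw [hT f i x hx, hT f j _ h, hq, map_smul]
    · intro a b ha hb
      rw [map_add, map_add, map_add, map_add, ha, hb]
  have hTs : ∀ f (x y : L), killingForm ℝ L (T f x) y = killingForm ℝ L x (T f y) := by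
    intro f x y
    refine hind (fun x => killingForm ℝ L (T f x) y = killingForm ℝ L x (T f y))
      ?_ (by simp) ?_ x
    · intro i x hx
      refine hind (fun y => killingForm ℝ L (T f x) y = killingForm ℝ L x (T f y))
        ?_ (by simp) ?_ y
      · intro j y hy
        rw [hT f i x hx, hT f j y hy, map_smul, LinearMap.smul_apply, map_smul]
        by_cases hij : i = j
        · rw [hij]
        · rw [horth _ hκi i j hij x hx y hy, smul_zero, smul_zero]
      · intro a b ha hb
        rw [map_add, map_add, map_add, ha, hb]
    · intro a b ha hb
      rw [map_add, map_add, map_add, LinearMap.add_apply, LinearMap.add_apply, ha, hb]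
  let Ψ : (Set.range orb → ℝ) →ₗ[ℝ] ↥(invSymmEquivForms L ρ) :=
    { toFun := fun f => ⟨LinearMap.comp (killingForm ℝ L) (T f), by
        refine ⟨fun x y z => ?_, fun x y => ?_, fun γ x y => ?_⟩
        · simp only [LinearMap.comp_apply]
          rw [hTlie, hκi]
        · simp only [LinearMap.comp_apply]
          rw [hTs, hκs]
        · simp only [LinearMap.comp_apply]
          rw [hTρ, hκρ]⟩
      map_add' := fun f f' => by
        apply Subtype.ext
        have : T (f + f') = T f + T f' := by
          simp [T, add_smul, Finset.sum_add_distrib]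
        change LinearMap.comp (killingForm ℝ L) (T (f + f')) = LinearMap.comp (killingForm ℝ L) (T f) +
          LinearMap.comp (killingForm ℝ L) (T f')
        rw [this, LinearMap.comp_add]
      map_smul' := fun c f => by
        apply Subtype.ext
        have : T (c • f) = c • T f := by
          simp [T, Finset.smul_sum, mul_smul]
        change LinearMap.comp (killingForm ℝ L) (T (c • f)) = c • LinearMap.comp (killingForm ℝ L) (T f)
        rw [this, LinearMap.comp_smul] }
  have hΨ : ∀ f x y, (Ψ f).1 x y = killingForm ℝ L (T f x) y := fun _ _ _ => rfl
  have hbij : Function.Bijective Ψ := by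
    constructor
    · rw [injective_iff_map_eq_zero]
      intro f hf
      funext ⟨s, i, hi⟩
      subst hi
      obtain ⟨x, hx, hx0⟩ := hne i
      have h := hΨ f x x
      rw [hf, hT f i x hx, map_smul, LinearMap.smul_apply] at h
      have h' : f (q i) * killingForm ℝ L x x = 0 := h.symm
      exact (mul_eq_zero.1 h').resolve_right (hneg i x hx hx0).ne
    · rintro ⟨B, hB1, hB2, hB3⟩
      have hc : ∀ i, ∃ c : ℝ, ∀ x ∈ g i, ∀ y ∈ g i, B x y = c * killingForm ℝ L x y := by
        intro i
        obtain ⟨c, hc⟩ := exists_scalar_of_simple (hsimple i)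
          ((killingForm ℝ L).compl₁₂ (A i).subtype (A i).subtype)
          (B.compl₁₂ (A i).subtype (A i).subtype)
          (fun x y => hκs x y) (fun x y => hB2 x y) (fun x y z => hκi x y z)
          (fun x y z => hB1 x y z)
          (fun x hx => hneg i x x.2 (fun h => hx (Subtype.ext h)))
        exact ⟨c, fun x hx y hy => hc ⟨x, hx⟩ ⟨y, hy⟩⟩
      choose c hc using hc
      have hcc : ∀ i j, orb i = orb j → c i = c j := by
        intro i j hij
        have hj : j ∈ orb i := by rw [hij]; exact horb1 j
        obtain ⟨γ, hγ⟩ := hj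
        obtain ⟨x, hx, hx0⟩ := hne i
        have h : ρ γ x ∈ A j := by
          rw [← hγ]
          exact ⟨x, hx, rfl⟩
        have h1 := hc j _ h _ h
        rw [hB3, hκρ, hc i x hx x hx] at h1
        exact mul_right_cancel₀ (hneg i x hx hx0).ne h1
      let f : Set.range orb → ℝ := fun s => c s.2.choose
      have hf : ∀ i, f (q i) = c i := fun i => hcc _ _ (q i).2.choose_spec
      refine ⟨f, Subtype.ext ?_⟩
      ext x y
      rw [hΨ]
      change _ = B x y
      refine hind (fun x => killingForm ℝ L (T f x) y = B x y) ?_ (by simp) ?_ x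
      · intro i x hx
        refine hind (fun y => killingForm ℝ L (T f x) y = B x y) ?_ (by simp) ?_ y
        · intro j y hy
          rw [hT f i x hx, map_smul, LinearMap.smul_apply, hf, smul_eq_mul]
          by_cases hij : i = j
          · subst hij
            rw [hc i x hx y hy]
          · rw [horth _ hκi i j hij x hx y hy, horth B hB1 i j hij x hx y hy, mul_zero]
        · intro a b ha hb
          rw [map_add, map_add, ha, hb]
      · intro a b ha hb
        rw [map_add, map_add, map_add, LinearMap.add_apply, LinearMap.add_apply, ha, hb]
  rw [← (LinearEquiv.ofBijective Ψ hbij).finrank_eq, Module.finrank_fintype_fun_eq_card,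
    Nat.card_eq_fintype_card]
end

section
/- Let 𝔤 = 𝔤₁ ⊕ ⋯ ⊕ 𝔤_r be a finite-dimensional real Lie algebra that is the direct sum of ideals 𝔤₁, …, 𝔤_r, each of which is a simple Lie algebra with negative-definite Killing form, and let 𝔥 ⊆ 𝔤 be a Lie subalgebra. If k := #{ i : 𝔥 ∩ 𝔤ᵢ ≠ 0 }, then dim N(𝔤,𝔥) ≤ r − k. -/
/-- The space `N(𝔤,𝔥)` of invariant symmetric bilinear forms on a real Lie algebra `L`
vanishing identically on a subspace `p`. -/
noncomputable def NForms (L : Type*) [LieRing L] [LieAlgebra ℝ L] (p : Submodule ℝ L) :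
    Submodule ℝ (L →ₗ[ℝ] L →ₗ[ℝ] ℝ) where
  carrier := {B | (∀ x y z : L, B ⁅x, y⁆ z = B x ⁅y, z⁆) ∧ (∀ x y : L, B x y = B y x) ∧
    ∀ x ∈ p, ∀ y ∈ p, B x y = 0}
  add_mem' := by
    rintro B C ⟨hB1, hB2, hB3⟩ ⟨hC1, hC2, hC3⟩
    exact ⟨fun x y z => by simp [hB1 x y z, hC1 x y z],
      fun x y => by simp [hB2 x y, hC2 x y],
      fun x hx y hy => by simp [hB3 x hx y hy, hC3 x hx y hy]⟩
  zero_mem' := ⟨fun _ _ _ => by simp, fun _ _ => by simp, fun _ _ _ _ => by simp⟩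
  smul_mem' := by
    rintro c B ⟨h1, h2, h3⟩
    exact ⟨fun x y z => by simp [h1 x y z], fun x y => by simp [h2 x y],
      fun x hx y hy => by simp [h3 x hx y hy]⟩

lemma aux_ideal {L : Type*} [LieRing L] [LieAlgebra ℝ L] (g W : LieIdeal ℝ L)
    (hs : LieAlgebra.IsSimple ℝ ↥g) (D : L →ₗ[ℝ] L →ₗ[ℝ] ℝ)
    (hD : ∀ x y z : L, D ⁅x, y⁆ z = D x ⁅y, z⁆)
    (v : L) (hv : v ∈ g) (hv0 : v ≠ 0) (hvW : ∀ w ∈ W, D v w = 0) :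
    ∀ z ∈ g, ∀ w ∈ W, D z w = 0 := by
  let I : LieIdeal ℝ ↥g :=
    { carrier := {z | ∀ w ∈ W, D (z : L) w = 0}
      add_mem' := by
        intro a b ha hb w hw
        simp [ha w hw, hb w hw]
      zero_mem' := by
        intro w hw
        simp
      smul_mem' := by
        intro c a ha w hw
        simp [ha w hw]
      lie_mem := by
        intro x m hm w hw
        have h1 : ((⁅x, m⁆ : ↥g) : L) = -⁅(m : L), (x : L)⁆ := by
          rw [lie_skew]; rfl
        show D ((⁅x, m⁆ : ↥g) : L) w = 0
        rw [h1, map_neg, LinearMap.neg_apply, hD, hm _ (W.lie_mem hw), neg_zero] }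
  rcases hs.eq_bot_or_eq_top I with hI | hI
  · exfalso
    have : (⟨v, hv⟩ : ↥g) ∈ I := hvW
    rw [hI, LieSubmodule.mem_bot] at this
    exact hv0 (congrArg Subtype.val this)
  · intro z hz
    have : (⟨z, hz⟩ : ↥g) ∈ I := by rw [hI]; exact LieSubmodule.mem_top _
    exact this

lemma aux_exists_ne {L : Type*} [LieRing L] [LieAlgebra ℝ L] (g : LieIdeal ℝ L)
    (hs : LieAlgebra.IsSimple ℝ ↥g) : ∃ x ∈ g, ∃ y ∈ g, ⁅x, y⁆ ≠ 0 := by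
  by_contra! hc
  apply hs.non_abelian
  refine ⟨fun x y => ?_⟩
  apply Subtype.ext
  exact hc x x.2 y y.2

lemma aux_eigen {V : Type*} [AddCommGroup V] [Module ℝ V] [FiniteDimensional ℝ V]
    [Nontrivial V] (P B : V →ₗ[ℝ] V →ₗ[ℝ] ℝ) (hPs : ∀ x y, P x y = P y x)
    (hPp : ∀ x, x ≠ 0 → 0 < P x x) (hB : ∀ x y, B x y = B y x) :
    ∃ c : ℝ, ∃ v : V, v ≠ 0 ∧ ∀ w, B v w = c * P v w := by
  have hnn : ∀ x, 0 ≤ P x x := by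
    intro x
    by_cases hx : x = 0
    · simp [hx]
    · exact (hPp x hx).le
  let core : InnerProductSpace.Core ℝ V :=
    { inner := fun x y => P x y
      conj_inner_symm := fun x y => by simp [hPs x y]
      re_inner_nonneg := fun x => by simpa using hnn x
      add_left := fun x y z => by simp
      smul_left := fun x y r => by simp
      definite := fun x hx => by
        by_contra h0
        exact (hPp x h0).ne' hx }
  let : NormedAddCommGroup V := core.toNormedAddCommGroup
  let : InnerProductSpace ℝ V := InnerProductSpace.ofCore core.toCore
  have hin : ∀ x y : V, inner ℝ x y = P x y := fun _ _ => rfl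
  have hnd : (P : LinearMap.BilinForm ℝ V).Nondegenerate := by
    constructor
    · intro x hx
      by_contra h0
      exact (hPp x h0).ne' (hx x)
    · intro x hx
      by_contra h0
      exact (hPp x h0).ne' (hx x)
  let T : V →ₗ[ℝ] V := (LinearMap.BilinForm.toDual P hnd).symm.toLinearMap ∘ₗ B
  have hT : ∀ x y, P (T x) y = B x y := by
    intro x y
    exact LinearMap.BilinForm.apply_toDual_symm_apply (B := P) (hB := hnd) (B x) y
  have hsym : T.IsSymmetric := by
    intro x y
    rw [hin, hin, hT, hPs, hT, hB]
  have := hsym.hasEigenvalue_iSup_of_finiteDimensional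
  obtain ⟨c, hc⟩ : ∃ c : ℝ, Module.End.HasEigenvalue T c := ⟨_, this⟩
  obtain ⟨v, hv⟩ := hc.exists_hasEigenvector
  refine ⟨c, v, hv.2, fun w => ?_⟩
  rw [← hT, hv.apply_eq_smul]
  simp only [map_smul, LinearMap.smul_apply, smul_eq_mul]

lemma aux_key {L : Type*} [LieRing L] [LieAlgebra ℝ L] [FiniteDimensional ℝ L]
    (g : LieIdeal ℝ L) (hs : LieAlgebra.IsSimple ℝ ↥g)
    (hneg : ∀ x ∈ g, x ≠ 0 → killingForm ℝ L x x < 0)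
    (B : L →ₗ[ℝ] L →ₗ[ℝ] ℝ) (hB : ∀ x y z : L, B ⁅x, y⁆ z = B x ⁅y, z⁆)
    (hBs : ∀ x y, B x y = B y x) (v : L) (hv : v ∈ g) (hv0 : v ≠ 0) (hBv : B v v = 0) :
    ∀ z ∈ g, ∀ w ∈ g, B z w = 0 := by
  let S : Submodule ℝ L := LieSubmodule.toSubmodule g
  have : Nontrivial S := ⟨⟨v, hv⟩, 0, fun h => hv0 (congrArg Subtype.val h)⟩
  obtain ⟨c, u, hu0, hu⟩ := aux_eigen (V := S) (-((killingForm ℝ L).domRestrict₁₂ S S))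
    (B.domRestrict₁₂ S S)
    (fun x y => by
      simp only [LinearMap.neg_apply, LinearMap.domRestrict₁₂_apply]
      rw [show killingForm ℝ L x y = killingForm ℝ L y x from LieModule.traceForm_comm ..])
    (fun x hx => by
      have h1 := hneg x x.2 (by simpa using hx)
      simp only [LinearMap.neg_apply, LinearMap.domRestrict₁₂_apply]
      linarith)
    (fun x y => hBs _ _)
  have hk := aux_ideal g g hs (B + c • killingForm ℝ L)
    (fun x y z => by
      simp only [LinearMap.add_apply, LinearMap.smul_apply, hB]
      rw [show killingForm ℝ L ⁅x, y⁆ z = killingForm ℝ L x ⁅y, z⁆ from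
        LieModule.traceForm_apply_lie_apply ..])
    u u.2 (by simpa using hu0)
    (fun w hw => by
      have := hu ⟨w, hw⟩
      simp only [LinearMap.neg_apply, LinearMap.domRestrict₁₂_apply] at this
      simp only [LinearMap.add_apply, LinearMap.smul_apply, smul_eq_mul, this]
      ring)
  have hc : c = 0 := by
    have := hk v hv v hv
    simp only [LinearMap.add_apply, LinearMap.smul_apply, smul_eq_mul, hBv, zero_add] at this
    exact (mul_eq_zero.mp this).resolve_right (hneg v hv hv0).ne
  simpa [hc] using hk

/-- Let `𝔤 = 𝔤₁ ⊕ ⋯ ⊕ 𝔤ᵣ` be a direct sum of ideals, each a simple Lie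
algebra with negative-definite Killing form, and let `𝔥 ⊆ 𝔤` be a Lie subalgebra.  If
`k = #{ i | 𝔥 ∩ 𝔤ᵢ ≠ 0 }` then `dim N(𝔤,𝔥) ≤ r − k`. -/
theorem stmt13 {L : Type*} [LieRing L] [LieAlgebra ℝ L] [FiniteDimensional ℝ L]
    (r : ℕ) (g : Fin r → LieIdeal ℝ L)
    (hsimple : ∀ i, LieAlgebra.IsSimple ℝ ↥(g i))
    (hneg : ∀ i, ∀ x ∈ g i, x ≠ 0 → killingForm ℝ L x x < 0)
    (hsup : (⨆ i, (LieSubmodule.toSubmodule (g i) : Submodule ℝ L)) = ⊤)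
    (hindep : iSupIndep (fun i => (LieSubmodule.toSubmodule (g i) : Submodule ℝ L)))
    (h : LieSubalgebra ℝ L) :
    Module.finrank ℝ ↥(NForms L h.toSubmodule) ≤
      r - Nat.card {i : Fin r //
        h.toSubmodule ⊓ (LieSubmodule.toSubmodule (g i) : Submodule ℝ L) ≠ ⊥} := by
  classical
  have hx : ∀ i, ∃ x : L, x ∈ g i ∧ x ≠ 0 ∧
      (h.toSubmodule ⊓ (LieSubmodule.toSubmodule (g i) : Submodule ℝ L) ≠ ⊥ → x ∈ h) := by
    intro i
    by_cases hi : h.toSubmodule ⊓ (LieSubmodule.toSubmodule (g i) : Submodule ℝ L) ≠ ⊥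
    · obtain ⟨x, hx, hx0⟩ := Submodule.exists_mem_ne_zero_of_ne_bot hi
      exact ⟨x, hx.2, hx0, fun _ => hx.1⟩
    · obtain ⟨x, hx, y, hy, hxy⟩ := aux_exists_ne (g i) (hsimple i)
      exact ⟨⁅x, y⁆, (g i).lie_mem hy, hxy, fun h' => absurd h' hi⟩
  choose x hxg hx0 hxh using hx
  let Q : Fin r → Prop := fun i =>
    h.toSubmodule ⊓ (LieSubmodule.toSubmodule (g i) : Submodule ℝ L) ≠ ⊥
  let F : ↥(NForms L h.toSubmodule) →ₗ[ℝ] ({i : Fin r // ¬ Q i} → ℝ) :=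
    { toFun := fun B i => (B : L →ₗ[ℝ] L →ₗ[ℝ] ℝ) (x i) (x i)
      map_add' := fun B C => by ext i; simp
      map_smul' := fun c B => by ext i; simp }
  have hF : Function.Injective F := by
    rintro ⟨B', hB1', hB2', hB3'⟩ ⟨C', hC1', hC2', hC3'⟩ hFB
    obtain ⟨B, hBdef⟩ : ∃ B : L →ₗ[ℝ] L →ₗ[ℝ] ℝ, ∀ a b, B a b = B' a b - C' a b :=
      ⟨B' - C', fun a b => by simp⟩
    have hB1 : ∀ x y z : L, B ⁅x, y⁆ z = B x ⁅y, z⁆ := fun x y z => by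
      rw [hBdef, hBdef, hB1', hC1']
    have hB2 : ∀ x y : L, B x y = B y x := fun x y => by
      rw [hBdef, hBdef, hB2', hC2']
    have hB3 : ∀ x ∈ h.toSubmodule, ∀ y ∈ h.toSubmodule, B x y = 0 := fun x hx y hy => by
      rw [hBdef, hB3' x hx y hy, hC3' x hx y hy, sub_zero]
    have hd : ∀ i, B (x i) (x i) = 0 := by
      intro i
      by_cases hi : Q i
      · exact hB3 _ (hxh i hi) _ (hxh i hi)
      · rw [hBdef]
        exact sub_eq_zero.mpr (congrFun hFB ⟨i, hi⟩)
    have hij : ∀ i j, ∀ z ∈ g i, ∀ w ∈ g j, B z w = 0 := by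
      intro i j
      by_cases e : i = j
      · subst e
        exact aux_key (g i) (hsimple i) (hneg i) B hB1 hB2 (x i) (hxg i) (hx0 i) (hd i)
      · obtain ⟨a, ha, b, hb, hab⟩ := aux_exists_ne (g i) (hsimple i)
        refine aux_ideal (g i) (g j) (hsimple i) B hB1 ⁅a, b⁆ ((g i).lie_mem hb) hab ?_
        intro w hw
        have h0 : ⁅b, w⁆ = 0 := by
          have hdis := hindep.pairwiseDisjoint e
          refine Submodule.disjoint_def.mp hdis _ ?_ ((g j).lie_mem hw)
          rw [← lie_skew]
          exact neg_mem ((g i).lie_mem hb)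
        rw [hB1, h0, map_zero]
    have hz : ∀ i, ∀ z ∈ g i, B z = 0 := by
      intro i z hz
      have : (⨆ j, (LieSubmodule.toSubmodule (g j) : Submodule ℝ L)) ≤ LinearMap.ker (B z) :=
        iSup_le fun j w hw => hij i j z hz w hw
      rw [hsup] at this
      ext w
      exact this (Submodule.mem_top (x := w))
    have : (⨆ j, (LieSubmodule.toSubmodule (g j) : Submodule ℝ L)) ≤ LinearMap.ker B :=
      iSup_le fun j w hw => hz j w hw
    rw [hsup] at this
    apply Subtype.ext
    refine LinearMap.ext fun z => LinearMap.ext fun w => ?_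
    have hz0 : B z = 0 := this (Submodule.mem_top (x := z))
    have hzw := hBdef z w
    rw [hz0, LinearMap.zero_apply] at hzw
    exact sub_eq_zero.mp hzw.symm
  have hle := LinearMap.finrank_le_finrank_of_injective hF
  rw [Module.finrank_fintype_fun_eq_card, Fintype.card_subtype_compl, Fintype.card_fin] at hle
  rw [Nat.card_eq_fintype_card]
  exact hle
end
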